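/- arXiv:1404.1598 — 3 statements merged into one kernel-verified Lean document; each statement's English description precedes it below -/
import Mathlib

section
/- If f ∈ Σ(X,P) and the submonoid of T(X,P) generated by S(X,P) ∪ ℬ contains a companion of f̄, then f belongs to the submonoid of T(X,P) generated by S(X,P) ∪ ℬ ∪ 𝒞. -/
open Function Set

/-- The monoid (as a subset of `Function.End X`) of all transformations preserving
the partition induced by the equivalence relation `r`. -/
def TSet {X : Type*} (r : Setoid X) : Set (Function.End X) :=
  {f | ∀ x y : X, r x y → r (f x) (f y)}

/-- The group of units of `TSet r` (i.e. `S(X,P)`): the permutations `g` of `X` with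
`x ∼ y ↔ g x ∼ g y`. -/
def SXP {X : Type*} (r : Setoid X) : Set (Function.End X) :=
  {f | Function.Bijective f ∧ ∀ x y : X, r (f x) (f y) ↔ r x y}

/-- The submonoid (as a subset) of transformations preserving the partition whose
image meets every block of the partition. -/
def SigmaSet {X : Type*} (r : Setoid X) : Set (Function.End X) :=
  {f | f ∈ TSet r ∧ ∀ B ∈ Setoid.classes r, (Set.range f ∩ B).Nonempty}

/-- The number of blocks of the partition having size `s`. -/
noncomputable def blockCount {X : Type*} (r : Setoid X) (s : ℕ) : ℕ :=
  {B | B ∈ Setoid.classes r ∧ B.ncard = s}.ncard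

/-- Membership in `ℬᵢ`, where `a = dᵢ` and `b = d_{i+1}` are consecutive distinct
block sizes: `f ∈ Σ(X,P)`, and there are blocks `B, B'` of size `a` and `C, C'`
of size `b` such that `f` maps `B` injectively into `C`, maps `C'` onto `B'`, and
maps every other block bijectively onto a block of the same size. -/
def memB {X : Type*} (r : Setoid X) (a b : ℕ) (f : Function.End X) : Prop :=
  f ∈ SigmaSet r ∧
    ∃ B B' C C' : Set X,
      B ∈ Setoid.classes r ∧ B' ∈ Setoid.classes r ∧
      C ∈ Setoid.classes r ∧ C' ∈ Setoid.classes r ∧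
      B.ncard = a ∧ B'.ncard = a ∧ C.ncard = b ∧ C'.ncard = b ∧
      Set.InjOn f B ∧ f '' B ⊆ C ∧ f '' C' = B' ∧
      ∀ D ∈ Setoid.classes r, D ≠ B → D ≠ C' →
        ∃ E ∈ Setoid.classes r, f '' D = E ∧ Set.InjOn f D ∧ E.ncard = D.ncard

/-- Membership in `𝒞ᵢ`, where `s = dᵢ` is a block size: `f ∈ Σ(X,P)`, `f` maps
every block into a block of the same size, there is one block of size `s` whose
image under `f` has size `s - 1`, and `f` is injective on every other block. -/
def memC {X : Type*} (r : Setoid X) (s : ℕ) (f : Function.End X) : Prop :=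
  f ∈ SigmaSet r ∧
    (∀ D ∈ Setoid.classes r, ∃ E ∈ Setoid.classes r, E.ncard = D.ncard ∧ f '' D ⊆ E) ∧
    ∃ B ∈ Setoid.classes r, B.ncard = s ∧ (f '' B).ncard = s - 1 ∧
      ∀ D ∈ Setoid.classes r, D ≠ B → Set.InjOn f D

/-- `ℬ`: the union of the sets `ℬᵢ` for `1 ≤ i ≤ R − 1`. -/
def Bset {X : Type*} (r : Setoid X) (R : ℕ) (d : ℕ → ℕ) : Set (Function.End X) :=
  {f | ∃ i, 1 ≤ i ∧ i + 1 ≤ R ∧ memB r (d i) (d (i + 1)) f}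

/-- `𝒞`: the union of the sets `𝒞ᵢ` for `1 ≤ i ≤ R`. -/
def Cset {X : Type*} (r : Setoid X) (R : ℕ) (d : ℕ → ℕ) : Set (Function.End X) :=
  {f | ∃ i, 1 ≤ i ∧ i ≤ R ∧ memC r (d i) f}

/-- `g` is a companion of the index permutation `σ` (relative to the enumeration
`Pb` of the blocks): `ḡ = σ`, `g` is injective on `Pb i` whenever
`|Pb i| ≤ |Pb (σ i)|`, and `g` maps `Pb i` onto `Pb (σ i)` whenever
`|Pb i| ≥ |Pb (σ i)|`. -/
def IsCompanion {X : Type*} {N : ℕ} (r : Setoid X) (Pb : Fin N → Set X)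
    (σ : Fin N → Fin N) (g : Function.End X) : Prop :=
  g ∈ SigmaSet r ∧ (∀ i, g '' Pb i ⊆ Pb (σ i)) ∧
    (∀ i, (Pb i).ncard ≤ (Pb (σ i)).ncard → Set.InjOn g (Pb i)) ∧
    (∀ i, (Pb (σ i)).ncard ≤ (Pb i).ncard → g '' Pb i = Pb (σ i))

/-!
Up to maps sending each block into itself, `f` can be recovered from any companion `g` of `f̄`.
As `ḡ` is a permutation of the blocks, `g` is injective on the union `A` of the blocks on which it
is injective, so some `k` preserving each block satisfies `k (g x) = f x` on `A` and is the identity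
off `g(A)`.  On a block outside `A`, `g` is onto the target block, so moving `x` inside its block to
a preimage of `f x` under `g` completes a factorization of `f` through `g`.

A map sending each block into itself is a product of units and elements of `𝒞`: if it misses `c`, it
identifies two points `a ≠ b` of the block of `c`.  Redefining it to send `a` to `c` enlarges its
image, and the original is recovered by first collapsing `a` to `b`, which is an element of `𝒞`.
-/

/-- The submonoid of `T(X,P)` of the transformations that map every block into itself: the
corrections by which `f` differs from a companion of `f̄`. -/
def blockFixing {X : Type*} (r : Setoid X) : Submonoid (Function.End X) where
  carrier := {h | ∀ x, r (h x) x}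
  one_mem' := r.refl
  mul_mem' hk hh x := r.trans (hk _) (hh x)

/-- The idempotent that sends `a` to `b` and fixes every other point.  For distinct `a` and `b` in
a common block this is the simplest element of `𝒞`. -/
def collapse {X : Type*} [DecidableEq X] (a b : X) : Function.End X :=
  Function.update id a b

section

variable {X : Type*} {r : Setoid X}

section collapse

variable [DecidableEq X]

theorem collapse_self (a b : X) : collapse a b a = b :=
  Function.update_self ..

theorem collapse_of_ne {a x : X} (b : X) (hx : x ≠ a) : collapse a b x = x :=
  Function.update_of_ne hx ..

theorem collapse_mem_blockFixing {a b : X} (hab : r a b) : collapse a b ∈ blockFixing r := by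
  intro x
  obtain rfl | hx := eq_or_ne x a
  · rw [collapse_self]
    exact r.symm hab
  · rw [collapse_of_ne b hx]

theorem injOn_collapse {a : X} (b : X) {D : Set X} (ha : a ∉ D) : InjOn (collapse a b) D :=
  injOn_id D |>.congr fun _ hx => (collapse_of_ne b (ne_of_mem_of_not_mem hx ha)).symm

theorem image_collapse {a b : X} {B : Set X} (hb : b ∈ B) (hab : a ≠ b) :
    collapse a b '' B = B \ {a} := by
  ext y
  constructor
  · rintro ⟨x, hx, rfl⟩
    obtain rfl | hxa := eq_or_ne x a
    · rw [collapse_self]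
      exact ⟨hb, hab.symm⟩
    · rw [collapse_of_ne b hxa]
      exact ⟨hx, hxa⟩
  · rintro ⟨hy, hya⟩
    exact ⟨y, hy, collapse_of_ne b hya⟩

end collapse

section blockFixing

theorem mem_sigmaSet_of_mem_blockFixing {h : Function.End X} (hh : h ∈ blockFixing r) :
    h ∈ SigmaSet r := by
  refine ⟨fun x y hxy => r.trans (hh x) (r.trans hxy (r.symm (hh y))), ?_⟩
  rintro _ ⟨y, rfl⟩
  exact ⟨h y, mem_range_self y, hh y⟩

theorem mem_sxp_of_mem_blockFixing {h : Function.End X} (hh : h ∈ blockFixing r)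
    (hbij : Bijective h) : h ∈ SXP r :=
  ⟨hbij, fun x y => ⟨fun hxy => r.trans (r.symm (hh x)) (r.trans hxy (hh y)),
    (mem_sigmaSet_of_mem_blockFixing hh).1 x y⟩⟩

theorem mapsTo_of_mem_blockFixing {h : Function.End X} (hh : h ∈ blockFixing r) {B : Set X}
    (hB : B ∈ r.classes) : MapsTo h B B := by
  obtain ⟨y, rfl⟩ := hB
  exact fun x hx => r.trans (hh x) hx

theorem memC_collapse [DecidableEq X] {a b : X} (hab : r a b) (hne : a ≠ b) :
    memC r {x | r x b}.ncard (collapse a b) := by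
  have hfix : collapse a b ∈ blockFixing r := collapse_mem_blockFixing hab
  have ha : a ∈ {x | r x b} := hab
  have hb : b ∈ {x | r x b} := r.refl b
  refine ⟨mem_sigmaSet_of_mem_blockFixing hfix,
    fun D hD => ⟨D, hD, rfl, (mapsTo_of_mem_blockFixing hfix hD).image_subset⟩,
    {x | r x b}, r.mem_classes b, rfl, ?_, fun D hD hDB => injOn_collapse b fun haD => hDB ?_⟩
  · rw [image_collapse hb hne, ncard_sdiff_singleton_of_mem ha]
  · exact Setoid.eq_of_mem_classes hD haD (r.mem_classes b) ha

theorem exists_ne_map_eq_of_notMem_range [Finite X] {h : Function.End X}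
    (hh : h ∈ blockFixing r) {c : X} (hc : c ∉ range h) :
    ∃ a b, r a c ∧ r b c ∧ a ≠ b ∧ h a = h b := by
  have hmaps : MapsTo h {x | r x c} {x | r x c} :=
    mapsTo_of_mem_blockFixing hh (r.mem_classes c)
  have hninj : ¬ InjOn h {x | r x c} := fun hinj =>
    have hbij := ((toFinite _).injOn_iff_bijOn_of_mapsTo hmaps).1 hinj
    hc (image_subset_range _ _ (hbij.surjOn (r.refl c)))
  simp only [InjOn, not_forall] at hninj
  obtain ⟨a, hac, b, hbc, heq, hne⟩ := hninj
  exact ⟨a, b, hac, hbc, hne, heq⟩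

theorem exists_eq_mul_collapse [Finite X] [DecidableEq X] {h : Function.End X}
    (hh : h ∈ blockFixing r) (hsurj : ¬ Surjective h) :
    ∃ h' ∈ blockFixing r, ∃ a b, r a b ∧ a ≠ b ∧ h = h' * collapse a b ∧ range h ⊂ range h' := by
  obtain ⟨c, hc⟩ : ∃ c, c ∉ range h := not_forall.1 hsurj
  obtain ⟨a, b, hac, hbc, hne, heq⟩ := exists_ne_map_eq_of_notMem_range hh hc
  let h' : Function.End X := Function.update h a c
  have h'_self : h' a = c := Function.update_self ..
  have h'_of_ne {x : X} (hx : x ≠ a) : h' x = h x := Function.update_of_ne hx ..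
  have hfac : h = h' * collapse a b := by
    funext x
    change h x = h' (collapse a b x)
    obtain rfl | hx := eq_or_ne x a
    · rw [collapse_self, h'_of_ne hne.symm, heq]
    · rw [collapse_of_ne b hx, h'_of_ne hx]
  refine ⟨h', fun x => ?_, a, b, r.trans hac (r.symm hbc), hne, hfac, ?_⟩
  · obtain rfl | hx := eq_or_ne x a
    · rw [h'_self]
      exact r.symm hac
    · rw [h'_of_ne hx]
      exact hh x
  · refine ssubset_of_subset_not_subset ?_ fun hsub => hc (hsub ⟨a, h'_self⟩)
    rw [hfac]
    exact range_comp_subset_range (collapse a b) h'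

theorem blockFixing_le_of_collapse_mem [Finite X] [DecidableEq X] {M : Submonoid (Function.End X)}
    (hperm : ∀ h ∈ blockFixing r, Bijective h → h ∈ M)
    (hcollapse : ∀ a b, r a b → a ≠ b → collapse a b ∈ M) : blockFixing r ≤ M := by
  intro h hh
  induction hs : range h using WellFoundedGT.induction generalizing h with
  | ind s ih =>
    by_cases hsurj : Surjective h
    · exact hperm h hh (Finite.surjective_iff_bijective.1 hsurj)
    · obtain ⟨h', hh', a, b, hab, hne, hfac, hlt⟩ := exists_eq_mul_collapse hh hsurj
      rw [hfac]
      exact M.mul_mem (ih (range h') (hs ▸ hlt) hh' rfl) (hcollapse a b hab hne)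

theorem blockFixing_le_closure [Finite X] {R : ℕ} {d : ℕ → ℕ}
    (hd : ∀ B ∈ r.classes, ∃ i, 1 ≤ i ∧ i ≤ R ∧ d i = B.ncard) :
    blockFixing r ≤ Submonoid.closure (SXP r ∪ Cset r R d) := by
  classical
  refine blockFixing_le_of_collapse_mem
    (fun h hh hbij => Submonoid.subset_closure (.inl (mem_sxp_of_mem_blockFixing hh hbij)))
    fun a b hab hne => Submonoid.subset_closure (.inr ?_)
  obtain ⟨i, hi, hiR, hsize⟩ := hd _ (r.mem_classes b)
  exact ⟨i, hi, hiR, hsize ▸ memC_collapse hab hne⟩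

end blockFixing

theorem exists_eq_mul_mul_of_injOn_or_image_subset {f g : Function.End X}
    (hfg : ∀ x, r (f x) (g x)) (hg : ∀ x y, r (g x) (g y) → r x y)
    (hblock : ∀ B ∈ r.classes, InjOn g B ∨ f '' B ⊆ g '' B) :
    ∃ k ∈ blockFixing r, ∃ h ∈ blockFixing r, f = k * g * h := by
  let A : Set X := {x | InjOn g {y | r y x}}
  have hA {x y : X} (hxy : r x y) (hx : x ∈ A) : y ∈ A :=
    hx.mono fun _ hz => r.trans hz (r.symm hxy)
  have hinj : Injective (A.domRestrict g) := by
    rintro ⟨x, _⟩ ⟨y, hy⟩ (hxy : g x = g y)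
    have hrel : r x y := hg x y (hxy ▸ r.refl _)
    exact Subtype.ext (hy hrel (r.refl y) hxy)
  let k : Function.End X := Function.extend (A.domRestrict g) (A.domRestrict f) id
  have hk_apply {x : X} (hx : x ∈ A) : k (g x) = f x := hinj.extend_apply _ _ ⟨x, hx⟩
  have hk_of_notMem {y : X} (hy : y ∉ g '' A) : k y = y :=
    Function.extend_apply' _ _ _ fun ⟨x, hx⟩ => hy ⟨x, x.2, hx⟩
  have hk : k ∈ blockFixing r := by
    intro y
    by_cases hy : y ∈ g '' A
    · obtain ⟨x, hx, rfl⟩ := hy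
      rw [hk_apply hx]
      exact hfg x
    · rw [hk_of_notMem hy]
  have hlift (x : X) : ∃ x', r x' x ∧ f x = k (g x') := by
    by_cases hx : x ∈ A
    · exact ⟨x, r.refl x, (hk_apply hx).symm⟩
    · obtain ⟨x', hx', hgx'⟩ := (hblock _ (r.mem_classes x)).resolve_left hx ⟨x, r.refl x, rfl⟩
      have hfx : f x ∉ g '' A := by
        rintro ⟨z, hz, hgz⟩
        exact hx (hA (hg z x (hgz ▸ hfg x)) hz)
      exact ⟨x', hx', by rw [hgx', hk_of_notMem hfx]⟩
  choose h hh hfac using hlift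
  exact ⟨k, hk, h, hh, funext hfac⟩

theorem rel_of_mem_sigmaSet [Finite (Quotient r)] {g : Function.End X} (hg : g ∈ SigmaSet r)
    {x y : X} (hxy : r (g x) (g y)) : r x y := by
  let gbar : Quotient r → Quotient r := Quotient.map g hg.1
  have hsurj : Surjective gbar := by
    rintro ⟨z⟩
    obtain ⟨_, ⟨w, rfl⟩, hw⟩ := hg.2 _ (r.mem_classes z)
    exact ⟨⟦w⟧, Quotient.sound hw⟩
  have hgbar : gbar ⟦x⟧ = gbar ⟦y⟧ := Quotient.sound hxy
  exact Quotient.exact (Finite.injective_iff_surjective.2 hsurj hgbar)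

theorem blockCount_ncard_ne_zero [Finite X] {B : Set X} (hB : B ∈ r.classes) :
    blockCount r B.ncard ≠ 0 :=
  ncard_ne_zero_of_mem (a := B) ⟨hB, rfl⟩

theorem IsCompanion.exists_eq_mul_mul [Finite (Quotient r)] {N : ℕ} {Pb : Fin N → Set X}
    (hPmem : ∀ i, Pb i ∈ r.classes) (hPsurj : ∀ B ∈ r.classes, ∃ i, Pb i = B)
    {f g : Function.End X} {F : Fin N → Fin N} (hF : ∀ i, f '' Pb i ⊆ Pb (F i))
    (hg : IsCompanion r Pb F g) :
    ∃ k ∈ blockFixing r, ∃ h ∈ blockFixing r, f = k * g * h := by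
  obtain ⟨hgSigma, hgF, hginj, hgsurj⟩ := hg
  refine exists_eq_mul_mul_of_injOn_or_image_subset (fun x => ?_)
    (fun x y => rel_of_mem_sigmaSet hgSigma) fun B hB => ?_
  · obtain ⟨i, hi⟩ := hPsurj _ (r.mem_classes x)
    have hx : x ∈ Pb i := hi ▸ r.refl x
    exact r.rel_iff_exists_classes.2
      ⟨Pb (F i), hPmem _, hF i (mem_image_of_mem f hx), hgF i (mem_image_of_mem g hx)⟩
  · obtain ⟨i, rfl⟩ := hPsurj B hB
    refine (le_total (Pb i).ncard (Pb (F i)).ncard).imp (hginj i) fun hle => ?_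
    exact (hF i).trans (hgsurj i hle).superset

end

/-- (Blocks are enumerated as `Pb 0, …, Pb (N-1)` with
nondecreasing sizes, and `d 1 < … < d R` are the distinct block sizes; `F` is
the index permutation induced by `f ∈ Σ(X,P)`.)  If the submonoid generated by
`S(X,P) ∪ ℬ` contains a companion of `f̄`, then `f` belongs to the submonoid
generated by `S(X,P) ∪ ℬ ∪ 𝒞`. -/
theorem mem_closure_of_companion {X : Type*} [Fintype X] [Nonempty X] (r : Setoid X)
    (N : ℕ) (Pb : Fin N → Set X)
    (hPmem : ∀ i, Pb i ∈ Setoid.classes r)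
    (hPinj : Function.Injective Pb)
    (hPsurj : ∀ B ∈ Setoid.classes r, ∃ i, Pb i = B)
    (hPmono : Monotone fun i => (Pb i).ncard)
    (R : ℕ) (d : ℕ → ℕ)
    (hdmono : ∀ i, 1 ≤ i → i + 1 ≤ R → d i < d (i + 1))
    (hdsizes : ∀ s, blockCount r s ≠ 0 ↔ ∃ i, 1 ≤ i ∧ i ≤ R ∧ d i = s)
    (f : Function.End X) (hf : f ∈ SigmaSet r)
    (F : Fin N → Fin N) (hF : ∀ i, f '' Pb i ⊆ Pb (F i))
    (hcomp : ∃ g ∈ (Submonoid.closure (SXP r ∪ Bset r R d) : Set (Function.End X)),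
      IsCompanion r Pb F g) :
    f ∈ (Submonoid.closure (SXP r ∪ Bset r R d ∪ Cset r R d) : Set (Function.End X)) := by
  obtain ⟨g, hg, hcompanion⟩ := hcomp
  obtain ⟨k, hk, h, hh, rfl⟩ := hcompanion.exists_eq_mul_mul hPmem hPsurj hF
  have hfixing : blockFixing r ≤ Submonoid.closure (SXP r ∪ Bset r R d ∪ Cset r R d) :=
    (blockFixing_le_closure fun B hB => (hdsizes _).1 (blockCount_ncard_ne_zero hB)).trans
      (Submonoid.closure_mono (union_subset_union_left _ subset_union_left))
  have hgmem : g ∈ Submonoid.closure (SXP r ∪ Bset r R d ∪ Cset r R d) :=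
    Submonoid.closure_mono subset_union_left hg
  exact mul_mem (mul_mem (hfixing hk) hgmem) (hfixing hh)
end

section
/- The monoid Σ(X,P) is generated by the set S(X,P) ∪ ℬ ∪ 𝒞. -/
open Function Set

/-!
A transformation `f` lies in `Σ(X,P)` exactly when it induces a permutation `σ` of the finite set
of blocks. If some block is mapped into a smaller one, let `p` be such a block of least size. A
counting argument yields a block `q` of the next smaller size for which `σ q` is larger than `σ p`.
As `σ p` is no larger than `q`, the restriction of `f` to `p` factors through `q`, so
`f = f * b * b` (the right factor acting first) for a map `b ∈ ℬ` exchanging `p` and `q`. By the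
rearrangement inequality, passing from `f` to `f * b` increases the sum of `|c| * |σ c|` over all
blocks `c`, which cannot go on forever. In the end no block is mapped into a smaller one, hence `σ`
preserves sizes; then collapses from `𝒞` are split off `f` one at a time, each enlarging the range
of the other factor, until a permutation is left.
-/

section Perm

variable {ι : Type*} {σ : ι → ι}

lemma mem_of_mapsTo_of_apply_mem (hσ : Injective σ) {s : Set ι} (hfin : s.Finite)
    (hs : MapsTo σ s s) {i : ι} (hi : σ i ∈ s) : i ∈ s := by
  have hbij : BijOn σ s s := (hfin.injOn_iff_bijOn_of_mapsTo hs).1 hσ.injOn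
  obtain ⟨j, hj, hji⟩ := hbij.surjOn hi
  exact hσ hji ▸ hj

lemma comp_eq_of_le_comp_of_injective [Finite ι] {α : Type*} [PartialOrder α] {N : ι → α}
    (hσ : Injective σ) (h : N ≤ N ∘ σ) : N ∘ σ = N := by
  funext i
  have hs : MapsTo σ {j | N (σ i) ≤ N j} {j | N (σ i) ≤ N j} := fun j hj => hj.trans (h j)
  exact le_antisymm (mem_of_mapsTo_of_apply_mem hσ (toFinite _) hs le_rfl) (h i)

/-- `a < b` are consecutive elements of `S`; for the set of block sizes these are the pairs
`(d_i, d_{i+1})` indexing the sets `ℬ_i`. -/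
def IsConsecutive {α : Type*} [Preorder α] (S : Set α) (a b : α) : Prop :=
  a ∈ S ∧ b ∈ S ∧ a < b ∧ ∀ s ∈ S, s ≤ a ∨ b ≤ s

lemma exists_isConsecutive_of_apply_lt [Finite ι] {α : Type*} [LinearOrder α]
    {N : ι → α} (hσ : Injective σ) (h : ∃ i, N (σ i) < N i) :
    ∃ p q, IsConsecutive (range N) (N q) (N p) ∧ N (σ p) ≤ N q ∧ N (σ p) < N (σ q) := by
  obtain ⟨p, hp, hpmin⟩ := exists_min_image {i | N (σ i) < N i} N (toFinite _) h
  obtain ⟨q₀, hq₀, hq₀max⟩ := exists_max_image {i | N i < N p} N (toFinite _) ⟨σ p, hp⟩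
  have hle : N (σ p) ≤ N q₀ := hq₀max _ hp
  obtain ⟨q, hq, hlt⟩ : ∃ q, N q = N q₀ ∧ N (σ p) < N (σ q) := by
    by_contra! hcon
    have hge : ∀ i, N i = N q₀ → N q₀ ≤ N (σ i) := fun i hi => by
      by_contra! hdown
      exact (hpmin i (hdown.trans_eq hi.symm)).not_gt (hi.trans_lt hq₀)
    have hlevel : MapsTo σ {i | N i = N q₀} {i | N i = N q₀} := fun i hi =>
      le_antisymm ((hcon i hi).trans hle) (hge i hi)
    have hσp : N (σ p) = N q₀ := le_antisymm hle ((hge q₀ rfl).trans (hcon q₀ rfl))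
    exact (mem_of_mapsTo_of_apply_mem hσ (toFinite _) hlevel hσp).not_gt hq₀
  refine ⟨p, q, ⟨mem_range_self q, mem_range_self p, hq.trans_lt hq₀, ?_⟩,
    hle.trans_eq hq.symm, hlt⟩
  rintro _ ⟨i, rfl⟩
  exact (lt_or_ge (N i) (N p)).imp_left fun hi => (hq₀max i hi).trans_eq hq.symm

end Perm

lemma isConsecutive_image_Icc_iff {α : Type*} [LinearOrder α] {d : ℕ → α} {m n : ℕ}
    (hd : StrictMonoOn d (Icc m n)) {a b : α} :
    IsConsecutive (d '' Icc m n) a b ↔ ∃ i, m ≤ i ∧ i + 1 ≤ n ∧ d i = a ∧ d (i + 1) = b := by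
  constructor
  · rintro ⟨⟨i, hi, rfl⟩, ⟨j, hj, rfl⟩, hlt, hgap⟩
    have hij : i < j := (hd.lt_iff_lt hi hj).1 hlt
    have hi' : i + 1 ∈ Icc m n := ⟨hi.1.trans i.le_succ, le_trans hij hj.2⟩
    have hji : j ≤ i + 1 := (hgap _ (mem_image_of_mem d hi')).elim
      (fun h => absurd ((hd.le_iff_le hi' hi).1 h) (Nat.not_succ_le_self i))
      (hd.le_iff_le hj hi').1
    exact ⟨i, hi.1, hi'.2, rfl, congrArg d (le_antisymm hij hji)⟩
  · rintro ⟨i, hmi, hin, rfl, rfl⟩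
    have hi : i ∈ Icc m n := ⟨hmi, by omega⟩
    have hi' : i + 1 ∈ Icc m n := ⟨by omega, hin⟩
    refine ⟨mem_image_of_mem d hi, mem_image_of_mem d hi', hd hi hi' i.lt_succ_self, ?_⟩
    rintro _ ⟨k, hk, rfl⟩
    exact (le_or_gt k i).imp (hd.le_iff_le hk hi).2 (hd.le_iff_le hi' hk).2

lemma sum_mul_lt_sum_mul_comp_swap {ι R : Type*} [Fintype ι] [DecidableEq ι] [Semiring R]
    [PartialOrder R] [IsStrictOrderedRing R] [ExistsAddOfLE R] {f g : ι → R} {p q : ι}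
    (hf : f q < f p) (hg : g p < g q) :
    ∑ i, f i * g i < ∑ i, f i * g (Equiv.swap p q i) := by
  have hpq : p ≠ q := fun h => hf.ne (by rw [h])
  have hrest : ∑ i ∈ {p, q}ᶜ, f i * g (Equiv.swap p q i) = ∑ i ∈ {p, q}ᶜ, f i * g i := by
    refine Finset.sum_congr rfl fun i hi => ?_
    simp only [Finset.mem_compl, Finset.mem_insert, Finset.mem_singleton, not_or] at hi
    rw [Equiv.swap_apply_of_ne_of_ne hi.1 hi.2]
  rw [← Finset.sum_add_sum_compl {p, q}, ← Finset.sum_add_sum_compl {p, q}, hrest,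
    Finset.sum_pair hpq, Finset.sum_pair hpq, Equiv.swap_apply_left, Equiv.swap_apply_right]
  gcongr ?_ + _
  rw [add_comm, add_comm (f p * g q)]
  exact mul_add_mul_lt_mul_add_mul hf hg

lemma exists_surjective_factorsThrough {α β γ : Type*} [Finite α] [Finite β] (f : α → γ)
    (hf : (range f).ncard ≤ Nat.card β) (hβ : Nat.card β ≤ Nat.card α) :
    ∃ s : α → β, Surjective s ∧ f.FactorsThrough s := by
  classical
  obtain ⟨T, -, hT⟩ := exists_subset_bijOn univ f
  rw [image_univ] at hT
  have hTcard : T.ncard ≤ Nat.card β := by rwa [← hT.injOn.ncard_image, hT.image_eq]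
  obtain ⟨U, hTU, -, hU⟩ :=
    exists_subsuperset_card_eq (subset_univ T) hTcard (hβ.trans_eq (ncard_univ α).symm)
  obtain ⟨ρ, hρU, hρf⟩ : ∃ ρ : α → U, (∀ u : U, ρ u = u) ∧ ∀ a, f (ρ a) = f a := by
    choose t htT ht using fun a => hT.surjOn (mem_range_self a)
    refine ⟨fun a => if ha : a ∈ U then ⟨a, ha⟩ else ⟨t a, hTU (htT a)⟩, fun u => ?_, fun a => ?_⟩
    · simp only [u.2, dite_true]
    · dsimp only
      split_ifs
      exacts [rfl, ht a]
  obtain ⟨e⟩ : Nonempty (U ≃ β) := Finite.card_eq.1 ((Nat.card_coe_set_eq U).trans hU)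
  refine ⟨e ∘ ρ, e.surjective.comp fun u => ⟨u, hρU u⟩, fun a b hab => ?_⟩
  rw [← hρf a, ← hρf b, e.injective hab]

section Update

variable {α β : Type*} [DecidableEq α] {f : α → β} {x y : α}

lemma update_comp_update_id (hxy : x ≠ y) (hf : f x = f y) (z : β) :
    update f x z ∘ update id x y = f := by
  rw [comp_update, update_of_ne hxy.symm, ← hf]
  funext a
  by_cases ha : a = x
  · rw [ha, update_self]
  · rw [update_of_ne ha, comp_apply, id, update_of_ne ha]

lemma range_ssubset_range_update (hxy : x ≠ y) (hf : f x = f y) {z : β} (hz : z ∉ range f) :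
    range f ⊂ range (update f x z) := by
  refine (ssubset_iff_of_subset ?_).2 ⟨z, ⟨x, update_self ..⟩, hz⟩
  conv_lhs => rw [← update_comp_update_id hxy hf z]
  exact range_comp_subset_range _ _

lemma semiconj_update {π : α → β} {f : α → α} {σ : β → β} (hf : Semiconj π f σ) {z : α}
    (hz : π z = σ (π x)) : Semiconj π (update f x z) σ := by
  intro a
  by_cases ha : a = x
  · rw [ha, update_self, hz]
  · rw [update_of_ne ha, hf a]

end Update

section Blocks

variable {X : Type*} {r : Setoid X}

/-- The block of the partition given by an element of the quotient. Blocks are indexed by the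
quotient so that maps in `Σ(X,P)` act on them by permutations. -/
def block (c : Quotient r) : Set X :=
  {x | Quotient.mk r x = c}

/-- The size of a block, `0` if the block is infinite. -/
noncomputable def blockSize (c : Quotient r) : ℕ :=
  (block c).ncard

lemma classes_eq_range_block (r : Setoid X) : r.classes = range (block (r := r)) := by
  have hmk : ∀ x, block (Quotient.mk r x) = {y | r y x} := fun x => ext fun y => Quotient.eq
  ext B
  constructor
  · rintro ⟨x, rfl⟩
    exact ⟨Quotient.mk r x, hmk x⟩
  · rintro ⟨c, rfl⟩
    obtain ⟨x, rfl⟩ := c.exists_rep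
    exact ⟨x, hmk x⟩

lemma block_mem_classes (c : Quotient r) : block c ∈ r.classes :=
  classes_eq_range_block r ▸ mem_range_self c

lemma mem_TSet_iff {f : Function.End X} :
    f ∈ TSet r ↔ ∃ σ : Quotient r → Quotient r, Semiconj (Quotient.mk r) f σ :=
  ⟨fun hf => ⟨Quotient.map f hf, fun _ => rfl⟩,
    fun ⟨σ, hσ⟩ x y hxy => Quotient.exact (by rw [hσ x, hσ y, Quotient.sound hxy])⟩

lemma mem_SigmaSet_iff [Finite (Quotient r)] {f : Function.End X} :
    f ∈ SigmaSet r ↔ ∃ σ : Equiv.Perm (Quotient r), Semiconj (Quotient.mk r) f σ := by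
  constructor
  · rintro ⟨hf, hmeet⟩
    obtain ⟨σ, hσ⟩ := mem_TSet_iff.1 hf
    have hsurj : Surjective σ := fun c => by
      obtain ⟨_, ⟨x, rfl⟩, hx⟩ := hmeet _ (block_mem_classes c)
      exact ⟨Quotient.mk r x, (hσ x).symm.trans hx⟩
    exact ⟨Equiv.ofBijective σ (Finite.surjective_iff_bijective.1 hsurj), hσ⟩
  · rintro ⟨σ, hσ⟩
    refine ⟨mem_TSet_iff.2 ⟨σ, hσ⟩, ?_⟩
    rw [classes_eq_range_block, forall_mem_range]
    intro c
    obtain ⟨x, hx⟩ := Quotient.exists_rep (σ.symm c)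
    exact ⟨f x, mem_range_self x, (hσ x).trans (σ.symm_apply_eq.1 hx.symm).symm⟩

/-- The monoid `Σ(X,P)`. -/
def sigmaSubmonoid (r : Setoid X) [Finite (Quotient r)] : Submonoid (Function.End X) where
  carrier := SigmaSet r
  one_mem' := mem_SigmaSet_iff.2 ⟨1, Semiconj.id_right⟩
  mul_mem' := fun hf hg => by
    obtain ⟨σ, hσ⟩ := mem_SigmaSet_iff.1 hf
    obtain ⟨τ, hτ⟩ := mem_SigmaSet_iff.1 hg
    exact mem_SigmaSet_iff.2 ⟨σ * τ, hσ.comp_right hτ⟩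

lemma SXP_subset_SigmaSet (r : Setoid X) : SXP r ⊆ SigmaSet r := by
  rintro f ⟨hbij, hf⟩
  refine ⟨fun x y => (hf x y).2, fun B hB => ?_⟩
  rw [hbij.surjective.range_eq, univ_inter]
  exact Setoid.nonempty_of_mem_partition (Setoid.isPartition_classes r) hB

lemma mem_SXP_of_semiconj {f : Function.End X} {σ : Equiv.Perm (Quotient r)}
    (hσ : Semiconj (Quotient.mk r) f σ) (hf : Bijective f) : f ∈ SXP r :=
  ⟨hf, fun x y => by rw [← Quotient.eq, hσ x, hσ y, σ.injective.eq_iff, Quotient.eq]⟩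

end Blocks

section Collapse

variable {X : Type*} {r : Setoid X}

/-- The set `𝒞`, indexed by the block sizes themselves. -/
def collapses (r : Setoid X) : Set (Function.End X) :=
  {f | ∃ s ∈ range (blockSize (r := r)), memC r s f}

lemma update_id_mem_collapses [Finite (Quotient r)] [DecidableEq X] {x y : X} (hne : x ≠ y)
    (hxy : Quotient.mk r x = Quotient.mk r y) :
    (update id x y : Function.End X) ∈ collapses r := by
  have hsemi : Semiconj (Quotient.mk r) (update id x y) (1 : Equiv.Perm (Quotient r)) :=
    semiconj_update (σ := id) Semiconj.id_right hxy.symm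
  have himage : update id x y '' block (Quotient.mk r x) = block (Quotient.mk r x) \ {x} := by
    ext z
    constructor
    · rintro ⟨w, hw, rfl⟩
      refine ⟨(hsemi w).trans hw, ?_⟩
      by_cases hwx : w = x
      · rw [hwx, update_self]
        exact hne.symm
      · rwa [update_of_ne hwx]
    · rintro ⟨hz, hzx⟩
      exact ⟨z, hz, update_of_ne hzx _ _⟩
  refine ⟨_, mem_range_self (Quotient.mk r x), mem_SigmaSet_iff.2 ⟨1, hsemi⟩, ?_,
    block (Quotient.mk r x), block_mem_classes _, rfl, ?_, ?_⟩
  · rw [classes_eq_range_block, forall_mem_range]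
    exact fun c => ⟨block c, mem_range_self c, rfl,
      image_subset_iff.2 fun w hw => (hsemi w).trans hw⟩
  · rw [himage]
    exact ncard_sdiff_singleton_of_mem rfl
  · rw [classes_eq_range_block, forall_mem_range]
    intro c hc
    have hid : EqOn (update id x y) id (block c) := fun w hw =>
      update_of_ne (fun hwx => hc (by rw [← hwx, hw])) _ _
    exact hid.injOn_iff.2 (injOn_id _)

lemma exists_notMem_range_of_apply_eq [Finite X] {f : Function.End X} {σ : Equiv.Perm (Quotient r)}
    (hσ : Semiconj (Quotient.mk r) f σ) {x y : X} (hne : x ≠ y) (hf : f x = f y)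
    (hsize : blockSize (Quotient.mk r x) ≤ blockSize (σ (Quotient.mk r x))) :
    Quotient.mk r x = Quotient.mk r y ∧
      ∃ z, Quotient.mk r z = σ (Quotient.mk r x) ∧ z ∉ range f := by
  have hxy : Quotient.mk r x = Quotient.mk r y := σ.injective (by rw [← hσ x, ← hσ y, hf])
  have hlt : (f '' block (Quotient.mk r x)).ncard < blockSize (Quotient.mk r x) :=
    lt_of_le_of_ne ncard_image_le fun h => hne ((ncard_image_iff (toFinite _)).1 h rfl hxy.symm hf)
  obtain ⟨z, hz, hzf⟩ := exists_mem_notMem_of_ncard_lt_ncard (hlt.trans_le hsize)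
  refine ⟨hxy, z, hz, ?_⟩
  rintro ⟨w, rfl⟩
  exact hzf (mem_image_of_mem f (σ.injective ((hσ w).symm.trans hz)))

lemma mem_closure_of_blockSize_comp_eq [Finite X] {f : Function.End X} {σ : Equiv.Perm (Quotient r)}
    (hσ : Semiconj (Quotient.mk r) f σ) (hsize : blockSize ∘ σ = blockSize) :
    f ∈ Submonoid.closure (SXP r ∪ collapses r) := by
  classical
  have : Finite (Function.End X) := Pi.finite
  by_contra hf
  obtain ⟨g, ⟨hgσ, hg⟩, hmax⟩ := exists_max_image
    {g : Function.End X | Semiconj (Quotient.mk r) g σ ∧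
      g ∉ Submonoid.closure (SXP r ∪ collapses r)} (fun g => (range g).ncard)
    (toFinite _) ⟨f, hσ, hf⟩
  have hinj : ¬ Injective g := fun h => hg <| Submonoid.subset_closure <| Or.inl <|
    mem_SXP_of_semiconj hgσ (Finite.injective_iff_bijective.1 h)
  obtain ⟨x, y, hgxy, hne⟩ := not_injective_iff.1 hinj
  obtain ⟨hxy, z, hz, hzg⟩ :=
    exists_notMem_range_of_apply_eq hgσ hne hgxy (congrFun hsize _).ge
  let u : Function.End X := update g x z
  let e : Function.End X := update id x y
  have he : e ∈ Submonoid.closure (SXP r ∪ collapses r) :=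
    Submonoid.subset_closure (Or.inr (update_id_mem_collapses hne hxy))
  have hu : u ∈ Submonoid.closure (SXP r ∪ collapses r) := by
    by_contra h
    exact (hmax u ⟨semiconj_update hgσ hz, h⟩).not_gt
      (ncard_lt_ncard (range_ssubset_range_update hne hgxy hzg))
  have hue : u * e = g := update_comp_update_id hne hgxy z
  exact hg (hue ▸ mul_mem hu he)

end Collapse

section Exchange

variable {X : Type*} {r : Setoid X}

/-- The set `ℬ`, indexed by the pairs of consecutive block sizes. -/
def exchanges (r : Setoid X) : Set (Function.End X) :=
  {f | ∃ a b, IsConsecutive (range (blockSize (r := r))) a b ∧ memB r a b f}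

open Classical in
/-- The transformation of `X` which exchanges the blocks `p` and `q` by means of `s` and `j`, and
fixes all points of the other blocks. If `p = q`, only `s` is used. -/
noncomputable def exchange {p q : Quotient r} (s : block p → block q) (j : block q → block p) :
    Function.End X := fun x =>
  if hp : x ∈ block p then s ⟨x, hp⟩ else if hq : x ∈ block q then j ⟨x, hq⟩ else x

variable {p q : Quotient r} {s : block p → block q} {j : block q → block p}

lemma exchange_apply_left (x : block p) : exchange s j x = s x :=
  dif_pos x.2

lemma exchange_apply_right (hpq : p ≠ q) (x : block q) : exchange s j x = j x := by
  have hp : (x : X) ∉ block p := fun hp => hpq (hp.symm.trans x.2)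
  exact (dif_neg hp).trans (dif_pos x.2)

lemma eqOn_exchange_id {c : Quotient r} (hp : c ≠ p) (hq : c ≠ q) :
    EqOn (exchange s j) id (block c) := fun _ hx =>
  (dif_neg fun h => hp (hx.symm.trans h)).trans (dif_neg fun h => hq (hx.symm.trans h))

lemma semiconj_exchange [DecidableEq (Quotient r)] (hpq : p ≠ q) :
    Semiconj (Quotient.mk r) (exchange s j) (Equiv.swap p q) := by
  intro x
  by_cases hp : Quotient.mk r x = p
  · rw [hp, Equiv.swap_apply_left, exchange_apply_left ⟨x, hp⟩]
    exact (s _).2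
  by_cases hq : Quotient.mk r x = q
  · rw [hq, Equiv.swap_apply_right, exchange_apply_right hpq ⟨x, hq⟩]
    exact (j _).2
  rw [Equiv.swap_apply_of_ne_of_ne hp hq, eqOn_exchange_id hp hq rfl, id]

lemma memB_exchange [Finite (Quotient r)] (hpq : p ≠ q) (hsj : LeftInverse s j) :
    memB r (blockSize q) (blockSize p) (exchange s j) := by
  classical
  have hinj : InjOn (exchange s j) (block q) := fun x hx y hy hxy => by
    rw [exchange_apply_right hpq ⟨x, hx⟩, exchange_apply_right hpq ⟨y, hy⟩] at hxy
    exact congrArg Subtype.val (hsj.injective (Subtype.ext hxy))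
  have hmaps : exchange s j '' block q ⊆ block p := by
    rintro _ ⟨x, hx, rfl⟩
    rw [exchange_apply_right hpq ⟨x, hx⟩]
    exact (j _).2
  have honto : exchange s j '' block p = block q := by
    ext y
    constructor
    · rintro ⟨x, hx, rfl⟩
      rw [exchange_apply_left ⟨x, hx⟩]
      exact (s _).2
    · exact fun hy => ⟨j ⟨y, hy⟩, (j _).2, by rw [exchange_apply_left, hsj]⟩
  refine ⟨mem_SigmaSet_iff.2 ⟨_, semiconj_exchange hpq⟩, block q, block q, block p, block p,
    block_mem_classes q, block_mem_classes q, block_mem_classes p, block_mem_classes p,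
    rfl, rfl, rfl, rfl, hinj, hmaps, honto, ?_⟩
  rw [classes_eq_range_block, forall_mem_range]
  intro c hcq hcp
  have hid : EqOn (exchange s j) id (block c) :=
    eqOn_exchange_id (fun h => hcp (congrArg block h)) (fun h => hcq (congrArg block h))
  exact ⟨block c, mem_range_self c, hid.image_eq_self, hid.injOn_iff.2 (injOn_id _), rfl⟩

lemma mul_exchange_mul_exchange {f : Function.End X} (hpq : p ≠ q) (hsj : LeftInverse s j)
    (hf : ∀ x : block p, f (j (s x)) = f x) : f * exchange s j * exchange s j = f := by
  funext x
  change f (exchange s j (exchange s j x)) = f x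
  by_cases hp : Quotient.mk r x = p
  · rw [exchange_apply_left ⟨x, hp⟩, exchange_apply_right hpq, hf]
  by_cases hq : Quotient.mk r x = q
  · rw [exchange_apply_right hpq ⟨x, hq⟩, exchange_apply_left, hsj]
  have hid : exchange s j x = x := eqOn_exchange_id hp hq rfl
  rw [hid, hid]

lemma exists_memB_mul_mul_eq [Finite X] [DecidableEq (Quotient r)] {f : Function.End X}
    {σ : Equiv.Perm (Quotient r)} (hσ : Semiconj (Quotient.mk r) f σ)
    (hlt : blockSize q < blockSize p) (hle : blockSize (σ p) ≤ blockSize q) :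
    ∃ b : Function.End X, memB r (blockSize q) (blockSize p) b ∧
      Semiconj (Quotient.mk r) b (Equiv.swap p q) ∧ f * b * b = f := by
  have hpq : p ≠ q := fun h => hlt.ne (by rw [h])
  have hrange : range (f ∘ Subtype.val : block p → X) ⊆ block (σ p) := by
    rintro _ ⟨x, rfl⟩
    exact (hσ x).trans (congrArg σ x.2)
  obtain ⟨s, hs, hfs⟩ := exists_surjective_factorsThrough (β := block q)
    (f ∘ Subtype.val : block p → X) ((ncard_le_ncard hrange).trans hle) hlt.le
  have hsj : LeftInverse s (surjInv hs) := surjInv_eq hs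
  exact ⟨exchange s (surjInv hs), memB_exchange hpq hsj, semiconj_exchange hpq,
    mul_exchange_mul_exchange hpq hsj fun x => hfs (hsj (s x))⟩

end Exchange

section Generation

variable {X : Type*} [Finite X] {r : Setoid X}

lemma mem_closure_of_semiconj {f : Function.End X} {σ : Equiv.Perm (Quotient r)}
    (hσ : Semiconj (Quotient.mk r) f σ) :
    f ∈ Submonoid.closure (SXP r ∪ exchanges r ∪ collapses r) := by
  classical
  have := Fintype.ofFinite (Quotient r)
  by_contra hf
  obtain ⟨τ, ⟨g, hgτ, hg⟩, hmax⟩ := exists_max_image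
    {τ : Equiv.Perm (Quotient r) | ∃ g : Function.End X, Semiconj (Quotient.mk r) g τ ∧
      g ∉ Submonoid.closure (SXP r ∪ exchanges r ∪ collapses r)}
    (fun τ => ∑ c, blockSize c * blockSize (τ c)) (toFinite _) ⟨σ, f, hσ, hf⟩
  have hdown : ∃ c, blockSize (τ c) < blockSize c := by
    by_contra! hup
    exact hg (Submonoid.closure_mono (union_subset_union_left _ subset_union_left)
      (mem_closure_of_blockSize_comp_eq hgτ (comp_eq_of_le_comp_of_injective τ.injective hup)))
  obtain ⟨p, q, hcons, hle, hτlt⟩ := exists_isConsecutive_of_apply_lt τ.injective hdown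
  have hlt : blockSize q < blockSize p := hcons.2.2.1
  obtain ⟨b, hb, hbswap, hgb⟩ := exists_memB_mul_mul_eq hgτ hlt hle
  have hbmem : b ∈ Submonoid.closure (SXP r ∪ exchanges r ∪ collapses r) :=
    Submonoid.subset_closure (Or.inl (Or.inr ⟨_, _, hcons, hb⟩))
  have hgbmem : g * b ∈ Submonoid.closure (SXP r ∪ exchanges r ∪ collapses r) := by
    by_contra h
    exact (hmax (τ * Equiv.swap p q) ⟨g * b, hgτ.comp_right hbswap, h⟩).not_gt
      (sum_mul_lt_sum_mul_comp_swap hlt hτlt)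
  exact hg (hgb ▸ mul_mem hgbmem hbmem)

lemma closure_SXP_union_exchanges_union_collapses (r : Setoid X) :
    Submonoid.closure (SXP r ∪ exchanges r ∪ collapses r) = sigmaSubmonoid r := by
  refine le_antisymm (Submonoid.closure_le.2 ?_) fun f hf => ?_
  · rintro f ((hf | ⟨_, _, _, hf⟩) | ⟨_, _, hf⟩)
    exacts [SXP_subset_SigmaSet r hf, hf.1, hf.1]
  · obtain ⟨σ, hσ⟩ := mem_SigmaSet_iff.1 hf
    exact mem_closure_of_semiconj hσ

lemma blockCount_ne_zero_iff {s : ℕ} : blockCount r s ≠ 0 ↔ s ∈ range (blockSize (r := r)) := by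
  rw [blockCount, ← Nat.pos_iff_ne_zero, ncard_pos, classes_eq_range_block]
  exact exists_range_iff

end Generation

section Indexing

variable {X : Type*} {r : Setoid X} {R : ℕ} {d : ℕ → ℕ}

lemma Bset_eq_exchanges (hd : StrictMonoOn d (Icc 1 R))
    (hsizes : d '' Icc 1 R = range (blockSize (r := r))) : Bset r R d = exchanges r := by
  ext f
  simp only [exchanges, ← hsizes, isConsecutive_image_Icc_iff hd]
  constructor
  · rintro ⟨i, h1, hR, hf⟩
    exact ⟨_, _, ⟨i, h1, hR, rfl, rfl⟩, hf⟩
  · rintro ⟨_, _, ⟨i, h1, hR, rfl, rfl⟩, hf⟩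
    exact ⟨i, h1, hR, hf⟩

lemma Cset_eq_collapses (hsizes : d '' Icc 1 R = range (blockSize (r := r))) :
    Cset r R d = collapses r := by
  ext f
  simp only [Cset, collapses, ← hsizes, exists_mem_image, mem_Icc, and_assoc]

end Indexing

/-- (Here `d 1 < … < d R` are the distinct block sizes of the
partition.)  The monoid `Σ(X,P)` is generated by `S(X,P) ∪ ℬ ∪ 𝒞`. -/
theorem SigmaXP_generated {X : Type*} [Fintype X] [Nonempty X] (r : Setoid X)
    (R : ℕ) (d : ℕ → ℕ)
    (hdmono : ∀ i, 1 ≤ i → i + 1 ≤ R → d i < d (i + 1))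
    (hdsizes : ∀ s, blockCount r s ≠ 0 ↔ ∃ i, 1 ≤ i ∧ i ≤ R ∧ d i = s)
    : (Submonoid.closure (SXP r ∪ Bset r R d ∪ Cset r R d) : Set (Function.End X))
        = SigmaSet r := by
  have hmono : StrictMonoOn d (Icc 1 R) :=
    strictMonoOn_of_lt_add_one ordConnected_Icc fun i _ hi hi' => hdmono i hi.1 hi'.2
  have hsizes : d '' Icc 1 R = range (blockSize (r := r)) := by
    ext s
    rw [← blockCount_ne_zero_iff, hdsizes]
    simp only [mem_image, mem_Icc, and_assoc]
  rw [Bset_eq_exchanges hmono hsizes, Cset_eq_collapses hsizes,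
    closure_SXP_union_exchanges_union_collapses]
  rfl
end

section
/- The relative rank of Σ(X,P) modulo S(X,P) equals p + q + g'(t) − 1 + l. -/
open Function Set

/-- The relative rank `rank(A : U)` of the monoid given by the subset `A` of `M`
modulo the subset `U`: the least cardinality of a set `W ⊆ A` such that `U ∪ W`
generates `A`. -/
noncomputable def relRank {M : Type*} [Monoid M] (A U : Set M) : ℕ :=
  sInf {k | ∃ W : Set M, W ⊆ A ∧ W.Finite ∧ W.ncard = k ∧
    (Submonoid.closure (U ∪ W) : Set M) = A}

/-- `g'(0) = 0` and `g'(t) = 1` for `t ≥ 1`. -/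
def gg' (t : ℕ) : ℕ := if 1 ≤ t then 1 else 0

/-!
View the blocks as the fibres of a map `q : X → Q`. The elements of `Σ(X,P)` are the `f` covering a
permutation `σ` of the blocks. Two kinds of generators are needed: for each block size `s` that is
not the least one, a swap of a block of size `s` with a block of the next smaller size; and, for
each `s ≥ 2` such that `s` but not `s - 1` is a block size, a collapse of two points of a block of
size `s`. If `s - 1` is a size too, the square of a swap is such a collapse.

Lower bound: write one of these elements as a word and take its rightmost letter outside the
submonoid preserving block sizes (for a swap) or outside the units (for a collapse). That letter
is injective on all blocks except one of size `s`, so it determines `s`, and the two kinds of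
letters are told apart by whether they preserve block sizes.

Upper bound: units and collapses generate all `f` with size-preserving `σ`. For other `σ` some two
blocks `A` and `B` of consecutive sizes `|A| < |B|` satisfy `|σ B| ≤ |A|` and `|σ B| < |σ A|`. As
`f` maps `B` to a block no larger than `A`, it factors through the swap of `A` and `B`, the left
factor covering `σ` times the transposition of `A` and `B`; this increases `∑ |b| |σ b|`, so the
process stops.
-/

namespace SigmaXP

open Equiv (Perm swap)

section

variable {ι α : Type*}

theorem apply_perm_eq_of_le [Finite ι] [PartialOrder α] {s : ι → α} {σ : Perm ι}
    (h : ∀ b, s b ≤ s (σ b)) (b : ι) : s (σ b) = s b := by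
  have le_pow (k : ℕ) : ∀ b, s b ≤ s ((σ ^ k) b) := by
    induction k with
    | zero => exact fun b => le_rfl
    | succ k ih => exact fun b => (h b).trans (pow_succ σ k ▸ ih (σ b))
  obtain ⟨k, hk⟩ : ∃ k : ℕ, σ ^ k * σ = 1 :=
    ⟨orderOf σ - 1, by rw [← pow_succ, Nat.sub_add_cancel (orderOf_pos σ), pow_orderOf_eq_one]⟩
  refine le_antisymm ?_ (h b)
  simpa only [← Perm.mul_apply, hk, Perm.one_apply] using le_pow k (σ b)

/-- The values of `s` at `A` and `B` are consecutive, in this order, in the range of `s`. -/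
def Consecutive [Preorder α] (s : ι → α) (A B : ι) : Prop :=
  s A < s B ∧ ∀ C, s C < s B → s C ≤ s A

theorem exists_consecutive_inversion [Finite ι] [LinearOrder α] {s : ι → α} {σ : Perm ι}
    (h : ∃ b, s (σ b) ≠ s b) :
    ∃ A B, Consecutive s A B ∧ s (σ B) ≤ s A ∧ s (σ B) < s (σ A) := by
  obtain ⟨a, ha⟩ : ∃ a, s a < s (σ a) := by
    by_contra! hle
    obtain ⟨b, hb⟩ := h
    exact hb (apply_perm_eq_of_le (α := αᵒᵈ) hle b)
  -- As `σ` moves `a` above the level `s a`, it moves some `B` back across this level.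
  have crossing : {B | s a < s B ∧ s (σ B) ≤ s a}.Nonempty := by
    by_contra! hempty
    have hinv : MapsTo σ {B | s a < s B} {B | s a < s B} := fun B hB =>
      not_le.1 fun hB' => (hempty ▸ ⟨hB, hB'⟩ : B ∈ (∅ : Set ι))
    obtain ⟨B, hB, hBa⟩ :=
      (((toFinite _).injOn_iff_bijOn_of_mapsTo hinv).1 σ.injective.injOn).surjOn ha
    exact lt_irrefl (s a) (σ.injective hBa ▸ hB)
  obtain ⟨B, ⟨haB, hB⟩, hBmin⟩ := exists_min_image _ s (toFinite _) crossing
  obtain ⟨A, ⟨hAB, hA⟩, hAmax⟩ :=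
    exists_max_image {A | s A < s B ∧ s a < s (σ A)} s (toFinite _) ⟨a, haB, ha⟩
  have haA : s a ≤ s A := hAmax a ⟨haB, ha⟩
  refine ⟨A, B, ⟨hAB, fun C hCB => ?_⟩, hB.trans haA, hB.trans_lt hA⟩
  by_contra! hAC
  have hσC : s a < s (σ C) :=
    not_le.1 fun hC => (hBmin C ⟨haA.trans_lt hAC, hC⟩).not_gt hCB
  exact (hAmax C ⟨hCB, hσC⟩).not_gt hAC

theorem sum_mul_perm_lt_sum_mul_perm_mul_swap {R : Type*} [Fintype ι] [DecidableEq ι]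
    [CommRing R] [PartialOrder R] [IsStrictOrderedRing R] {f g : ι → R} {σ : Perm ι} {A B : ι}
    (hf : f A < f B) (hg : g (σ B) < g (σ A)) :
    ∑ b, f b * g (σ b) < ∑ b, f b * g ((σ * swap A B) b) := by
  have hAB : A ≠ B := by rintro rfl; exact hf.false
  rw [← sub_pos, ← Finset.sum_sub_distrib, Fintype.sum_eq_add A B hAB]
  · simp only [Perm.mul_apply, Equiv.swap_apply_left, Equiv.swap_apply_right]
    linear_combination mul_pos (sub_pos.2 hf) (sub_pos.2 hg)
  · rintro c ⟨hA, hB⟩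
    rw [Perm.mul_apply, Equiv.swap_apply_of_ne_of_ne hA hB, sub_self]

theorem exists_section_retraction {β : Type*} {S : Set α} {T : Set β} (hS : S.Finite)
    (hne : S.Nonempty) (h : S.ncard ≤ T.ncard) :
    ∃ (i : α → β) (j : β → α), MapsTo i S T ∧ MapsTo j T S ∧ LeftInvOn j i S := by
  have hT : 0 < T.ncard := ((ncard_pos hS).2 hne).trans_le h
  have : Nonempty S := hne.to_subtype
  have : Nonempty β := (nonempty_of_ncard_ne_zero hT.ne').to_type
  have hcard : S.encard ≤ T.encard := by
    rw [← hS.cast_ncard_eq, ← (finite_of_ncard_pos hT).cast_ncard_eq]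
    exact_mod_cast h
  obtain ⟨i, hiT, hi⟩ := hS.exists_injOn_of_encard_le hcard
  refine ⟨i, fun y => (invFun (S.domRestrict i) y : S), hiT, fun _ _ => Subtype.prop _,
    fun x hx => ?_⟩
  exact congrArg Subtype.val (leftInverse_invFun (injOn_iff_injective.1 hi) ⟨x, hx⟩)

theorem ncard_nonminimal (S : Set ℕ) : {s ∈ S | ∃ a ∈ S, a < s}.ncard = S.ncard - 1 := by
  rcases S.eq_empty_or_nonempty with rfl | hS
  · simp
  · have hmin : {s ∈ S | ∃ a ∈ S, a < s} = S \ {sInf S} := by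
      ext s
      refine and_congr_right fun hs => ⟨?_, fun hne => ?_⟩
      · rintro ⟨a, ha, has⟩ rfl
        exact (Nat.sInf_le ha).not_gt has
      · exact ⟨sInf S, Nat.sInf_mem hS, (Nat.sInf_le hs).lt_of_ne' hne⟩
    rw [hmin, ncard_sdiff_singleton_of_mem (Nat.sInf_mem hS)]

end

variable {X Q : Type*} {q : X → Q}

/-! ### Transformations permuting the blocks -/

/-- The size of the block `b`, the blocks being encoded as the fibres of a map `q : X → Q`. -/
noncomputable def blockSize (q : X → Q) (b : Q) : ℕ := (q ⁻¹' {b}).ncard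

/-- The monoid `Σ(X,P)` of transformations that cover a permutation of the blocks. -/
def sigma (q : X → Q) : Submonoid (Function.End X) where
  carrier := {f | ∃ σ : Perm Q, Semiconj q f σ}
  one_mem' := ⟨1, Semiconj.id_right⟩
  mul_mem' := fun ⟨σ, hf⟩ ⟨τ, hg⟩ => ⟨σ * τ, hf.comp_right hg⟩

/-- The group of units `S(X,P)`, as a submonoid of `Function.End X`. -/
def unitGroup (q : X → Q) : Submonoid (Function.End X) where
  carrier := {f | Bijective f ∧ f ∈ sigma q}
  one_mem' := ⟨bijective_id, one_mem _⟩
  mul_mem' := fun ⟨hf, hf'⟩ ⟨hg, hg'⟩ => ⟨hf.comp hg, mul_mem hf' hg'⟩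

/-- The monoid of transformations sending each block into a block of the same size, distinct
blocks going into distinct blocks. It separates the two kinds of generators: collapses lie in it,
swaps of blocks of different sizes do not. -/
def sizePreserving (q : X → Q) : Submonoid (Function.End X) where
  carrier := {f | ∃ σ : Perm Q, Semiconj q f σ ∧ ∀ b, blockSize q (σ b) = blockSize q b}
  one_mem' := ⟨1, Semiconj.id_right, fun _ => rfl⟩
  mul_mem' := fun ⟨σ, hf, hσ⟩ ⟨τ, hg, hτ⟩ =>
    ⟨σ * τ, hf.comp_right hg, fun b => (hσ (τ b)).trans (hτ b)⟩

theorem sizePreserving_le_sigma : sizePreserving q ≤ sigma q :=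
  fun _ ⟨σ, hf, _⟩ => ⟨σ, hf⟩

theorem semiconj_unique (hq : Surjective q) {f : X → X} {σ τ : Q → Q} (hσ : Semiconj q f σ)
    (hτ : Semiconj q f τ) : σ = τ :=
  hq.injective_comp_right (hσ.comp_eq.symm.trans hτ.comp_eq)

theorem mapsTo_block {f : X → X} {σ : Q → Q} (hf : Semiconj q f σ) (b : Q) :
    MapsTo f (q ⁻¹' {b}) (q ⁻¹' {σ b}) :=
  hf.mapsTo_preimage (mapsTo_singleton.2 rfl)

theorem blockSize_le_of_injOn [Finite X] {f : X → X} {σ : Q → Q} (hf : Semiconj q f σ) {b : Q}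
    (hinj : InjOn f (q ⁻¹' {b})) : blockSize q b ≤ blockSize q (σ b) :=
  ncard_le_ncard_of_injOn f (mapsTo_block hf b) hinj

theorem injOn_block_iff_image_eq [Finite X] {f : X → X} {σ : Q → Q} (hf : Semiconj q f σ) {b : Q}
    (hb : blockSize q (σ b) = blockSize q b) :
    InjOn f (q ⁻¹' {b}) ↔ f '' (q ⁻¹' {b}) = q ⁻¹' {σ b} := by
  rw [← ncard_image_iff]
  constructor
  · exact fun h => eq_of_subset_of_ncard_le (mapsTo_block hf b).image_subset (hb.trans h.symm).le
  · exact fun h => (congrArg ncard h).trans hb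

theorem injective_of_forall_injOn_block {f : X → X} {σ : Perm Q} (hf : Semiconj q f σ)
    (hinj : ∀ b, InjOn f (q ⁻¹' {b})) : Injective f := by
  intro x y hxy
  have hqxy : q x = q y := σ.injective (by rw [← hf, ← hf, hxy])
  exact hinj (q y) hqxy rfl hxy

theorem mem_unitGroup_of_injective [Finite X] {f : Function.End X} (hf : f ∈ sigma q)
    (hinj : Injective f) : f ∈ unitGroup q :=
  ⟨Finite.injective_iff_bijective.1 hinj, hf⟩

theorem perm_mem_unitGroup {e : Perm X} {σ : Perm Q} (he : Semiconj q e σ) :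
    (e : X → X) ∈ unitGroup q :=
  ⟨e.bijective, σ, he⟩

theorem semiconj_perm_symm {e : Perm X} {σ : Perm Q} (he : Semiconj q e σ) :
    Semiconj q e.symm σ.symm :=
  he.inverses_right e.apply_symm_apply σ.symm_apply_apply

theorem unitGroup_le_sizePreserving [Finite X] [Finite Q] : unitGroup q ≤ sizePreserving q :=
  fun _ ⟨hbij, σ, hf⟩ =>
    ⟨σ, hf, apply_perm_eq_of_le fun _ => blockSize_le_of_injOn hf hbij.injective.injOn⟩

/-- The values of the block size function. -/
def blockSizes (q : X → Q) : Set ℕ := range (blockSize q)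

/-- The block sizes exceeding some other block size. -/
def nonminimalSizes (q : X → Q) : Set ℕ := {s ∈ blockSizes q | ∃ a ∈ blockSizes q, a < s}

/-- The sizes `s ≥ 2` of blocks such that no block has size `s - 1`. -/
def gapSizes (q : X → Q) : Set ℕ := {s ∈ blockSizes q | 2 ≤ s ∧ s - 1 ∉ blockSizes q}

theorem finite_blockSizes [Finite Q] : (blockSizes q).Finite := finite_range _

/-! ### Collapses -/

open Classical in
/-- The idempotent moving only the point `x`, which goes to `y`. -/
noncomputable def collapse (x y : X) : Function.End X := update id x y

theorem collapse_apply_self (x y : X) : collapse x y x = y := by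
  simp [collapse]

theorem collapse_apply_of_ne {x y z : X} (h : z ≠ x) : collapse x y z = z := by
  simp [collapse, h]

theorem conj_collapse (e : Perm X) (x y : X) :
    e ∘ collapse x y ∘ e.symm = collapse (e x) (e y) := by
  funext z
  change e (collapse x y (e.symm z)) = collapse (e x) (e y) z
  by_cases hz : z = e x
  · rw [hz, e.symm_apply_apply, collapse_apply_self, collapse_apply_self]
  · rw [collapse_apply_of_ne hz, collapse_apply_of_ne fun h => hz (e.symm_apply_eq.1 h),
      e.apply_symm_apply]

/-- `e` is a collapse within a block of size `s`. -/
def IsBlockCollapse (q : X → Q) (s : ℕ) (e : Function.End X) : Prop :=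
  ∃ x y, x ≠ y ∧ q x = q y ∧ blockSize q (q x) = s ∧ e = collapse x y

theorem one_lt_blockSize_iff [Finite X] {b : Q} :
    1 < blockSize q b ↔ ∃ x y, x ≠ y ∧ q x = b ∧ q y = b := by
  rw [blockSize, one_lt_ncard_iff]
  exact exists₂_congr fun x y => by simp only [mem_preimage, mem_singleton_iff]; tauto

theorem exists_isBlockCollapse [Finite X] {s : ℕ} (hs : s ∈ gapSizes q) :
    ∃ e, IsBlockCollapse q s e := by
  obtain ⟨⟨b, rfl⟩, hs, -⟩ := hs
  obtain ⟨x, y, hxy, rfl, hy⟩ := one_lt_blockSize_iff.1 hs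
  exact ⟨_, x, y, hxy, hy.symm, rfl, rfl⟩

theorem IsBlockCollapse.mem_sizePreserving {s : ℕ} {e : Function.End X}
    (he : IsBlockCollapse q s e) : e ∈ sizePreserving q := by
  obtain ⟨x, y, -, hq, -, rfl⟩ := he
  refine ⟨1, fun z => ?_, fun _ => rfl⟩
  by_cases hz : z = x
  · rw [hz, collapse_apply_self, ← hq, Perm.one_apply]
  · rw [collapse_apply_of_ne hz, Perm.one_apply]

theorem IsBlockCollapse.notMem_unitGroup {s : ℕ} {e : Function.End X}
    (he : IsBlockCollapse q s e) : e ∉ unitGroup q := by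
  obtain ⟨x, y, hxy, -, -, rfl⟩ := he
  refine fun h => hxy (h.1.injective ?_)
  rw [collapse_apply_self, collapse_apply_of_ne hxy.symm]

theorem exists_perm_semiconj [Finite X] {σ : Perm Q}
    (h : ∀ b, blockSize q (σ b) = blockSize q b) : ∃ e : Perm X, Semiconj q e σ := by
  have fibre_equiv (c : Q) : Nonempty ({x // σ (q x) = c} ≃ {y // q y = c}) := by
    refine Finite.card_eq.1 ?_
    have hfibre : {x | σ (q x) = c} = q ⁻¹' {σ.symm c} := by
      ext x
      exact (Equiv.eq_symm_apply σ).symm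
    change {x | σ (q x) = c}.ncard = blockSize q c
    rw [hfibre, ← blockSize, ← h, σ.apply_symm_apply]
  exact ⟨Equiv.ofFiberEquiv fun c => (fibre_equiv c).some, Equiv.ofFiberEquiv_map _⟩

theorem exists_perm_fixing_blocks {x y x' y' : X} (hxy : x ≠ y) (hxy' : x' ≠ y')
    (hy : q y = q x) (hx' : q x' = q x) (hy' : q y' = q x) :
    ∃ e : Perm X, Semiconj q e id ∧ e x = x' ∧ e y = y' := by
  classical
  obtain ⟨g, hgx, hgy⟩ : ∃ g : Perm {z // q z = q x},
      g ⟨x, rfl⟩ = ⟨x', hx'⟩ ∧ g ⟨y, hy⟩ = ⟨y', hy'⟩ :=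
    MulAction.is_two_pretransitive_iff.1 (Perm.isMultiplyPretransitive _ 2)
      (Subtype.coe_ne_coe.1 hxy) (Subtype.coe_ne_coe.1 hxy')
  refine ⟨Perm.ofSubtype g, fun z => ?_, ?_, ?_⟩
  · by_cases hz : q z = q x
    · rw [Perm.ofSubtype_apply_of_mem g hz, (g ⟨z, hz⟩).2, id, hz]
    · rw [Perm.ofSubtype_apply_of_not_mem g hz, id]
  · rw [Perm.ofSubtype_apply_of_mem g rfl]
    exact congrArg Subtype.val hgx
  · rw [Perm.ofSubtype_apply_of_mem g hy]
    exact congrArg Subtype.val hgy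

theorem blockSize_swap_apply [DecidableEq Q] {A B : Q} (h : blockSize q A = blockSize q B)
    (b : Q) : blockSize q (swap A B b) = blockSize q b := by
  rw [Equiv.swap_apply_def]
  split_ifs with hA hB
  · rw [hA, h]
  · rw [hB, h]
  · rfl

theorem IsBlockCollapse.mem_of_mem [Finite X] {M : Submonoid (Function.End X)} {s : ℕ}
    {e e' : Function.End X} (hunits : unitGroup q ≤ M) (he : IsBlockCollapse q s e) (heM : e ∈ M)
    (he' : IsBlockCollapse q s e') : e' ∈ M := by
  classical
  obtain ⟨x, y, hxy, hqxy, hs, rfl⟩ := he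
  obtain ⟨x', y', hxy', hqxy', hs', rfl⟩ := he'
  obtain ⟨u, hu⟩ := exists_perm_semiconj (blockSize_swap_apply (hs.trans hs'.symm))
  have hux : q (u x) = q x' := by rw [hu, Equiv.swap_apply_left]
  have huy : q (u y) = q x' := by rw [hu, ← hqxy, Equiv.swap_apply_left]
  obtain ⟨v, hv, hvx, hvy⟩ := exists_perm_fixing_blocks (q := q) (u.injective.ne hxy) hxy'
    (huy.trans hux.symm) hux.symm (hqxy'.symm.trans hux.symm)
  obtain ⟨w, hw, hwx, hwy⟩ : ∃ w : Perm X,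
      Semiconj q w (1 * swap (q x) (q x') : Perm Q) ∧ w x = x' ∧ w y = y' :=
    ⟨v * u, hv.comp_right hu, hvx, hvy⟩
  rw [← hwx, ← hwy, ← conj_collapse]
  exact (mul_mem (hunits (perm_mem_unitGroup hw))
    (mul_mem heM (hunits (perm_mem_unitGroup (semiconj_perm_symm hw)))) :)

/-! ### Block swaps -/

/-- `d` exchanges the blocks `A` and `B`, fixes every point outside them, and is inverse to
itself on `A`. On `B` it need not be injective: `d ∘ d` retracts `B` onto `d '' A`. -/
structure IsBlockSwap (q : X → Q) (A B : Q) (d : X → X) : Prop where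
  map_left : ∀ x, q x = A → q (d x) = B
  map_right : ∀ x, q x = B → q (d x) = A
  apply_of_ne : ∀ x, q x ≠ A → q x ≠ B → d x = x
  apply_apply : ∀ x, q x = A → d (d x) = x

/-- `d` swaps a block of size `s` with a block of the largest size below `s`. -/
def IsStepSwap (q : X → Q) (s : ℕ) (d : X → X) : Prop :=
  ∃ A B, Consecutive (blockSize q) A B ∧ blockSize q B = s ∧ IsBlockSwap q A B d

theorem exists_isBlockSwap [Finite X] (hq : Surjective q) {A B : Q} (hAB : A ≠ B)
    (h : blockSize q A ≤ blockSize q B) : ∃ d, IsBlockSwap q A B d := by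
  classical
  obtain ⟨i, j, hi, hj, hji⟩ :=
    exists_section_retraction (toFinite (q ⁻¹' {A})) ((singleton_nonempty A).preimage hq) h
  refine ⟨fun x => if q x = A then i x else if q x = B then j x else x, fun x hx => ?_,
    fun x hx => ?_, fun x hA hB => ?_, fun x hx => ?_⟩
  · rw [if_pos hx]
    exact hi hx
  · rw [hx, if_neg hAB.symm, if_pos rfl]
    exact hj hx
  · simp only [if_neg hA, if_neg hB]
  · have hix : q (i x) = B := hi hx
    simpa only [if_pos hx, hix, if_neg hAB.symm, if_pos] using hji hx

theorem IsBlockSwap.semiconj [DecidableEq Q] {A B : Q} {d : X → X} (hd : IsBlockSwap q A B d) :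
    Semiconj q d (swap A B) := by
  intro x
  by_cases hA : q x = A
  · rw [hd.map_left x hA, hA, Equiv.swap_apply_left]
  by_cases hB : q x = B
  · rw [hd.map_right x hB, hB, Equiv.swap_apply_right]
  rw [hd.apply_of_ne x hA hB, Equiv.swap_apply_of_ne_of_ne hA hB]

theorem IsBlockSwap.injOn {A B : Q} {d : X → X} (hd : IsBlockSwap q A B d) {b : Q} (hb : b ≠ B) :
    InjOn d (q ⁻¹' {b}) := by
  rintro x rfl y hxy h
  by_cases hA : q x = A
  · rw [← hd.apply_apply x hA, h, hd.apply_apply y (hxy.trans hA)]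
  · rwa [hd.apply_of_ne x hA hb, hd.apply_of_ne y (hxy.trans_ne hA) (hxy.trans_ne hb)] at h

theorem IsBlockSwap.conj {A B : Q} {d : X → X} (hd : IsBlockSwap q A B d) {e : Perm X}
    {σ : Perm Q} (he : Semiconj q e σ) : IsBlockSwap q (σ A) (σ B) (e ∘ d ∘ e.symm) := by
  have q_symm {x : X} {b : Q} : q (e.symm x) = b ↔ q x = σ b := by
    rw [semiconj_perm_symm he, Equiv.symm_apply_eq]
  refine ⟨fun x hx => ?_, fun x hx => ?_, fun x hA hB => ?_, fun x hx => ?_⟩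
  · rw [comp_apply, he, comp_apply, hd.map_left _ (q_symm.2 hx)]
  · rw [comp_apply, he, comp_apply, hd.map_right _ (q_symm.2 hx)]
  · rw [comp_apply, comp_apply, hd.apply_of_ne _ (mt q_symm.1 hA) (mt q_symm.1 hB),
      e.apply_symm_apply]
  · simp only [comp_apply, e.symm_apply_apply]
    rw [hd.apply_apply _ (q_symm.2 hx), e.apply_symm_apply]

theorem IsBlockSwap.isBlockCollapse_mul_self [Finite X] {A B : Q} {d : Function.End X}
    (hd : IsBlockSwap q A B d) (h : blockSize q B = blockSize q A + 1) :
    IsBlockCollapse q (blockSize q B) (d * d) := by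
  have hAB : A ≠ B := by rintro rfl; omega
  have himage : d '' (q ⁻¹' {A}) ⊆ q ⁻¹' {B} := image_subset_iff.2 hd.map_left
  obtain ⟨x, hx⟩ : ∃ x, q ⁻¹' {B} \ d '' (q ⁻¹' {A}) = {x} := by
    rw [← ncard_eq_one, ncard_sdiff himage, (hd.injOn hAB).ncard_image, ← blockSize,
      ← blockSize, h, Nat.add_sub_cancel_left]
  obtain ⟨hxB : q x = B, hxA⟩ : x ∈ q ⁻¹' {B} \ d '' (q ⁻¹' {A}) := hx ▸ mem_singleton x
  refine ⟨x, d (d x), fun hxd => hxA ⟨d x, hd.map_right x hxB, hxd.symm⟩,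
    by rw [hd.map_left _ (hd.map_right x hxB), hxB], by rw [hxB], ?_⟩
  funext z
  change d (d z) = _
  by_cases hz : z = x
  · rw [hz, collapse_apply_self]
  rw [collapse_apply_of_ne hz]
  by_cases hzA : q z = A
  · exact hd.apply_apply z hzA
  by_cases hzB : q z = B
  · obtain ⟨a, ha, rfl⟩ : z ∈ d '' (q ⁻¹' {A}) := by
      by_contra hzd
      exact hz (hx.subset ⟨hzB, hzd⟩)
    rw [hd.apply_apply a ha]
  · rw [hd.apply_of_ne z hzA hzB, hd.apply_of_ne z hzA hzB]

theorem exists_isStepSwap [Finite X] [Finite Q] (hq : Surjective q) {s : ℕ}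
    (hs : s ∈ nonminimalSizes q) : ∃ d : Function.End X, IsStepSwap q s d := by
  obtain ⟨⟨B, rfl⟩, -, ⟨C, rfl⟩, hCB⟩ := hs
  obtain ⟨A, hAB : blockSize q A < blockSize q B, hmax⟩ :=
    exists_max_image {A | blockSize q A < blockSize q B} (blockSize q) (toFinite _) ⟨C, hCB⟩
  obtain ⟨d, hd⟩ := exists_isBlockSwap hq
    (ne_of_apply_ne (blockSize q) hAB.ne) hAB.le
  exact ⟨d, A, B, ⟨hAB, hmax⟩, rfl, hd⟩

theorem IsStepSwap.mem_sigma {s : ℕ} {d : Function.End X} (hd : IsStepSwap q s d) :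
    d ∈ sigma q := by
  classical
  obtain ⟨A, B, -, -, hd⟩ := hd
  exact ⟨swap A B, hd.semiconj⟩

theorem IsStepSwap.notMem_sizePreserving (hq : Surjective q) {s : ℕ} {d : Function.End X}
    (hd : IsStepSwap q s d) : d ∉ sizePreserving q := by
  classical
  obtain ⟨A, B, hAB, -, hd⟩ := hd
  rintro ⟨σ, hσ, hsize⟩
  have hA := hsize A
  rw [semiconj_unique hq hσ hd.semiconj, Equiv.swap_apply_left] at hA
  exact hAB.1.ne' hA

theorem IsStepSwap.exists_mem_isBlockSwap [Finite X] {M : Submonoid (Function.End X)} {A B : Q}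
    {d : Function.End X} (hunits : unitGroup q ≤ M) (hd : IsStepSwap q (blockSize q B) d)
    (hdM : d ∈ M) (hAB : Consecutive (blockSize q) A B) : ∃ d' ∈ M, IsBlockSwap q A B d' := by
  classical
  obtain ⟨A', B', hAB', hB, hd⟩ := hd
  have hA : blockSize q A' = blockSize q A :=
    le_antisymm (hAB.2 A' (hB ▸ hAB'.1)) (hAB'.2 A (hB.symm ▸ hAB.1))
  have hsize (b : Q) : blockSize q ((swap B' B * swap A' A) b) = blockSize q b :=
    (blockSize_swap_apply hB _).trans (blockSize_swap_apply hA b)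
  obtain ⟨e, he⟩ := exists_perm_semiconj hsize
  have heA : (swap B' B * swap A' A) A' = A := by
    rw [Perm.mul_apply, Equiv.swap_apply_left, Equiv.swap_apply_of_ne_of_ne]
    · exact ne_of_apply_ne (blockSize q) (hA ▸ hAB'.1.ne)
    · exact ne_of_apply_ne _ hAB.1.ne
  have heB : (swap B' B * swap A' A) B' = B := by
    rw [Perm.mul_apply, Equiv.swap_apply_of_ne_of_ne (a := A'), Equiv.swap_apply_left]
    · exact ne_of_apply_ne _ hAB'.1.ne'
    · exact ne_of_apply_ne (blockSize q) (hA ▸ hAB'.1.ne')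
  have hde := hd.conj he
  rw [heA, heB] at hde
  exact ⟨_, mul_mem (hunits (perm_mem_unitGroup he))
    (mul_mem hdM (hunits (perm_mem_unitGroup (semiconj_perm_symm he)))), hde⟩

/-! ### The lower bound -/

theorem exists_mem_closure_factor {M : Type*} [Monoid M] {S : Set M} {H : Submonoid M} {x : M}
    (hx : x ∈ Submonoid.closure S) (hxH : x ∉ H) :
    ∃ g ∈ S, g ∉ H ∧ ∃ u, ∃ v ∈ H, x = u * (g * v) := by
  induction hx using Submonoid.closure_induction_left with
  | one => exact absurd H.one_mem hxH
  | mul_left g hg y _ ih =>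
    by_cases hy : y ∈ H
    · exact ⟨g, hg, fun hgH => hxH (H.mul_mem hgH hy), 1, y, hy, (one_mul _).symm⟩
    · obtain ⟨g', hg', hg'H, u, v, hv, rfl⟩ := ih hy
      exact ⟨g', hg', hg'H, g * u, v, hv, (mul_assoc g u _).symm⟩

/-- `f` is injective on every block except possibly one block of size `s`, on which it takes at
least `c` values. The size `s` identifies the generators needed for the swap or the collapse of
size `s`, as it passes on to factors. -/
def NearInjective (q : X → Q) (s c : ℕ) (f : X → X) : Prop :=
  ∃ B, blockSize q B = s ∧ (∀ b ≠ B, InjOn f (q ⁻¹' {b})) ∧ c ≤ (f '' (q ⁻¹' {B})).ncard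

theorem IsStepSwap.nearInjective {s : ℕ} {d : X → X} (hd : IsStepSwap q s d) :
    NearInjective q s 0 d := by
  obtain ⟨A, B, -, hs, hd⟩ := hd
  exact ⟨B, hs, fun _ => hd.injOn, Nat.zero_le _⟩

theorem IsBlockCollapse.nearInjective [Finite X] {s : ℕ} {e : Function.End X}
    (he : IsBlockCollapse q s e) : NearInjective q s (s - 1) e := by
  obtain ⟨x, y, -, -, rfl, rfl⟩ := he
  have fixes : EqOn (collapse x y) id {x}ᶜ := fun z hz => collapse_apply_of_ne hz
  refine ⟨q x, rfl, fun b hb => ?_, ?_⟩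
  · have hbx : q ⁻¹' {b} ⊆ {x}ᶜ := by
      rintro z rfl rfl
      exact hb rfl
    exact (injective_id.injOn.congr fixes.symm).mono hbx
  · have hx : x ∈ q ⁻¹' {q x} := rfl
    rw [blockSize, ← ncard_sdiff_singleton_of_mem hx]
    exact ncard_le_ncard fun z hz => ⟨z, hz.1, fixes hz.2⟩

theorem NearInjective.of_comp_right [Finite X] {s c : ℕ} {f g : X → X}
    (h : NearInjective q s c (f ∘ g)) : NearInjective q s c g := by
  obtain ⟨B, hB, hinj, hc⟩ := h
  refine ⟨B, hB, fun b hb => (hinj b hb).of_comp, hc.trans ?_⟩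
  rw [image_comp]
  exact ncard_image_le

theorem NearInjective.of_comp_left [Finite X] {s c : ℕ} {f g : X → X}
    (h : NearInjective q s c (f ∘ g)) (hg : g ∈ sizePreserving q) : NearInjective q s c f := by
  obtain ⟨B, hB, hinj, hc⟩ := h
  obtain ⟨σ, hσ, hsize⟩ := hg
  refine ⟨σ B, (hsize B).trans hB, fun b hb => ?_, hc.trans ?_⟩
  · obtain ⟨b, rfl⟩ := σ.surjective b
    have hfg : InjOn (f ∘ g) (q ⁻¹' {b}) := hinj b (ne_of_apply_ne σ hb)
    rw [← (injOn_block_iff_image_eq hσ (hsize b)).1 hfg.of_comp]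
    exact hfg.image_of_comp
  · rw [image_comp]
    exact ncard_le_ncard (image_mono (mapsTo_block hσ B).image_subset)

theorem NearInjective.size_unique {s c s' c' : ℕ} {f : Function.End X} (hf : f ∈ sigma q)
    (hinj : ¬ Injective f) (h : NearInjective q s c f) (h' : NearInjective q s' c' f) :
    s = s' := by
  obtain ⟨σ, hσ⟩ := hf
  obtain ⟨B, rfl, hB, -⟩ := h
  obtain ⟨B', rfl, hB', -⟩ := h'
  by_contra hne
  refine hinj (injective_of_forall_injOn_block hσ fun b => ?_)
  rcases eq_or_ne b B with rfl | hb
  · exact hB' b (ne_of_apply_ne _ hne)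
  · exact hB b hb

theorem NearInjective.mem_sizePreserving [Finite X] [Finite Q] {s : ℕ} {f : Function.End X}
    (hf : f ∈ sigma q) (h : NearInjective q s (s - 1) f) (hs : s - 1 ∉ blockSizes q) :
    f ∈ sizePreserving q := by
  obtain ⟨σ, hσ⟩ := hf
  obtain ⟨B, rfl, hinj, hB⟩ := h
  refine ⟨σ, hσ, apply_perm_eq_of_le fun b => ?_⟩
  rcases eq_or_ne b B with rfl | hb
  · have hle : blockSize q b - 1 ≤ blockSize q (σ b) :=
      hB.trans (ncard_le_ncard (mapsTo_block hσ b).image_subset)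
    have hne : blockSize q (σ b) ≠ blockSize q b - 1 := fun h => hs ⟨σ b, h⟩
    omega
  · exact blockSize_le_of_injOn hσ (hinj b hb)

theorem exists_nearInjective_generator [Finite X] {W : Set (Function.End X)}
    {H : Submonoid (Function.End X)} (hunits : unitGroup q ≤ H) (hH : H ≤ sizePreserving q)
    {s c : ℕ} {f : Function.End X} (hf : f ∈ Submonoid.closure (unitGroup q ∪ W)) (hfH : f ∉ H)
    (h : NearInjective q s c f) : ∃ g ∈ W, g ∉ H ∧ NearInjective q s c g := by
  obtain ⟨g, hgW, hgH, u, v, hv, rfl⟩ := exists_mem_closure_factor hf hfH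
  exact ⟨g, hgW.resolve_left fun hgu => hgH (hunits hgu), hgH,
    h.of_comp_right.of_comp_left (hH hv)⟩

theorem ncard_sizes_le_ncard [Finite X] {S : Set ℕ} {W : Set (Function.End X)} (hW : W.Finite)
    (hsigma : W ⊆ sigma q)
    (h : ∀ s ∈ S, ∃ g ∈ W, g ∉ unitGroup q ∧ ∃ c, NearInjective q s c g) : S.ncard ≤ W.ncard := by
  choose! g hgW hg c hgs using h
  refine ncard_le_ncard_of_injOn g hgW (fun s hs s' hs' hss' => ?_) hW
  have hinj : ¬ Injective (g s) := mt (mem_unitGroup_of_injective (hsigma (hgW s hs))) (hg s hs)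
  exact (hgs s hs).size_unique (hsigma (hgW s hs)) hinj (hss' ▸ hgs s' hs')

theorem ncard_add_ncard_le_ncard_generators [Finite X] [Finite Q] (hq : Surjective q)
    {W : Set (Function.End X)} (hW : W.Finite)
    (hgen : Submonoid.closure (unitGroup q ∪ W) = sigma q) :
    (nonminimalSizes q).ncard + (gapSizes q).ncard ≤ W.ncard := by
  have hsigma : W ⊆ sigma q :=
    hgen ▸ subset_union_right.trans Submonoid.subset_closure
  have swaps : (nonminimalSizes q).ncard ≤ (W \ sizePreserving q).ncard := by
    refine ncard_sizes_le_ncard hW.sdiff (sdiff_subset.trans hsigma) fun s hs => ?_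
    obtain ⟨d, hd⟩ := exists_isStepSwap hq hs
    obtain ⟨g, hgW, hg, hgs⟩ := exists_nearInjective_generator unitGroup_le_sizePreserving le_rfl
      (hgen ▸ IsStepSwap.mem_sigma hd) (hd.notMem_sizePreserving hq) hd.nearInjective
    exact ⟨g, ⟨hgW, hg⟩, fun hgu => hg (unitGroup_le_sizePreserving hgu), 0, hgs⟩
  have collapses : (gapSizes q).ncard ≤ (W ∩ sizePreserving q).ncard := by
    refine ncard_sizes_le_ncard (hW.inter_of_left _) (inter_subset_left.trans hsigma) fun s hs => ?_
    obtain ⟨e, he⟩ := exists_isBlockCollapse hs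
    obtain ⟨g, hgW, hg, hgs⟩ := exists_nearInjective_generator le_rfl unitGroup_le_sizePreserving
      (hgen ▸ sizePreserving_le_sigma he.mem_sizePreserving) he.notMem_unitGroup he.nearInjective
    exact ⟨g, ⟨hgW, hgs.mem_sizePreserving (hsigma hgW) hs.2.2⟩, hg, s - 1, hgs⟩
  calc (nonminimalSizes q).ncard + (gapSizes q).ncard
      ≤ (W \ sizePreserving q).ncard + (W ∩ sizePreserving q).ncard := add_le_add swaps collapses
    _ = W.ncard := by rw [add_comm, ncard_inter_add_ncard_sdiff_eq_ncard W _ hW]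

/-! ### The upper bound -/

theorem exists_eq_mul_collapse [Finite X] {f : Function.End X} {σ : Perm Q} (hf : Semiconj q f σ)
    (hsize : ∀ b, blockSize q (σ b) = blockSize q b) (hinj : ¬ Injective f) :
    ∃ (f' : Function.End X) (x y : X), Semiconj q f' σ ∧ range f ⊂ range f' ∧ x ≠ y ∧ q x = q y ∧
      f = f' * collapse x y := by
  classical
  obtain ⟨b, hb⟩ : ∃ b, ¬ InjOn f (q ⁻¹' {b}) := by
    by_contra! h
    exact hinj (injective_of_forall_injOn_block hf h)
  have himage : f '' (q ⁻¹' {b}) ⊂ q ⁻¹' {σ b} :=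
    (mapsTo_block hf b).image_subset.ssubset_of_ne (mt (injOn_block_iff_image_eq hf (hsize b)).2 hb)
  obtain ⟨z, hz, hzf⟩ := exists_of_ssubset himage
  have hz_range : z ∉ range f := by
    rintro ⟨w, rfl⟩
    exact hzf ⟨w, σ.injective ((hf w).symm.trans hz), rfl⟩
  obtain ⟨x, rfl, y, hxy, hfxy, hne⟩ : ∃ x, q x = b ∧ ∃ y, q y = b ∧ f x = f y ∧ x ≠ y := by
    simpa only [InjOn, not_forall, exists_prop, mem_preimage, mem_singleton_iff] using hb
  let f' : Function.End X := update f x z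
  have hf'x : f' x = z := update_self (β := fun _ => X) x z f
  have hf'_of_ne {w : X} (hw : w ≠ x) : f' w = f w := update_of_ne (β := fun _ => X) hw z f
  have hfactor (w : X) : f w = f' (collapse x y w) := by
    by_cases hw : w = x
    · rw [hw, collapse_apply_self, hf'_of_ne hne.symm, hfxy]
    · rw [collapse_apply_of_ne hw, hf'_of_ne hw]
  refine ⟨f', x, y, fun w => ?_, ?_, hne, hxy.symm, funext hfactor⟩
  · by_cases hw : w = x
    · rw [hw, hf'x, hz]
    · rw [hf'_of_ne hw, hf]
  · refine ssubset_iff_exists.2 ⟨?_, z, ⟨x, hf'x⟩, hz_range⟩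
    rintro _ ⟨w, rfl⟩
    exact ⟨_, (hfactor w).symm⟩

theorem sizePreserving_le [Finite X] {M : Submonoid (Function.End X)} (hunits : unitGroup q ≤ M)
    (hcollapse : ∀ s e, IsBlockCollapse q s e → e ∈ M) : sizePreserving q ≤ M := by
  rintro f ⟨σ, hf, hsize⟩
  induction h : range f using WellFoundedGT.induction generalizing f with
  | ind R ih =>
    by_cases hinj : Injective f
    · exact hunits (mem_unitGroup_of_injective ⟨σ, hf⟩ hinj)
    · obtain ⟨f', x, y, hf', hrange, hxy, hqxy, rfl⟩ := exists_eq_mul_collapse hf hsize hinj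
      exact mul_mem (ih _ (h ▸ hrange) hf' rfl) (hcollapse _ _ ⟨x, y, hxy, hqxy, rfl, rfl⟩)

theorem IsBlockSwap.exists_eq_comp [Finite X] [DecidableEq Q] (hq : Surjective q) {A B : Q}
    (hAB : A ≠ B) {f d : X → X} {σ : Perm Q} (hf : Semiconj q f σ) (hd : IsBlockSwap q A B d)
    (h : blockSize q (σ B) ≤ blockSize q A) :
    ∃ f' v : Function.End X, Semiconj q f' (σ * swap A B : Perm Q) ∧ Semiconj q v (1 : Perm Q) ∧
      f = f' ∘ d ∘ v := by
  obtain ⟨i, j, hi, hj, hji⟩ :=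
    exists_section_retraction (toFinite (q ⁻¹' {σ B})) ((singleton_nonempty _).preimage hq) h
  have hif {x : X} (hx : q x = B) : q (i (f x)) = A := hi (mapsTo_block hf B hx)
  refine ⟨fun x => if q x = A then j x else if q x = B then f (d x) else f x,
    fun x => if q x = B then d (i (f x)) else x, fun x => ?_, fun x => ?_, funext fun x => ?_⟩
  · simp only [Perm.mul_apply, ← hd.semiconj x]
    split_ifs with hA hB
    · rw [hd.map_left x hA]
      exact hj hA
    · exact hf (d x)
    · rw [hd.apply_of_ne x hA hB, hf]
  · simp only [Perm.one_apply]
    split_ifs with hB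
    · rw [hd.map_left _ (hif hB), hB]
    · rfl
  · simp only [comp_apply]
    by_cases hB : q x = B
    · rw [if_pos hB, hd.apply_apply _ (hif hB), if_pos (hif hB)]
      exact (hji (mapsTo_block hf B hB)).symm
    rw [if_neg hB]
    by_cases hA : q x = A
    · rw [if_neg (by rw [hd.map_left x hA]; exact hAB.symm), if_pos (hd.map_left x hA),
        hd.apply_apply x hA]
    · rw [hd.apply_of_ne x hA hB, if_neg hA, if_neg hB]

theorem sigma_le [Finite X] [Finite Q] (hq : Surjective q) {M : Submonoid (Function.End X)}
    (hM : sizePreserving q ≤ M)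
    (hswap : ∀ A B, Consecutive (blockSize q) A B → ∃ d ∈ M, IsBlockSwap q A B d) :
    sigma q ≤ M := by
  classical
  have := Fintype.ofFinite Q
  by_contra hle
  obtain ⟨f₀, ⟨σ₀, hf₀⟩, hf₀M⟩ := SetLike.not_le_iff_exists.1 hle
  obtain ⟨σ, ⟨f, hf, hfM⟩, hmax⟩ := exists_max_image
    {σ : Perm Q | ∃ f : Function.End X, Semiconj q f σ ∧ f ∉ M}
    (fun σ => ∑ b, (blockSize q b : ℤ) * blockSize q (σ b)) (toFinite _) ⟨σ₀, f₀, hf₀, hf₀M⟩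
  have hσ : ∃ b, blockSize q (σ b) ≠ blockSize q b := by
    by_contra! h
    exact hfM (hM ⟨σ, hf, h⟩)
  obtain ⟨A, B, hAB, hσB, hσA⟩ := exists_consecutive_inversion hσ
  obtain ⟨d, hdM, hd⟩ := hswap A B hAB
  obtain ⟨f', v, hf', hv, rfl⟩ := hd.exists_eq_comp hq (ne_of_apply_ne _ hAB.1.ne) hf hσB
  have hf'M : f' ∉ M := fun hf'M =>
    hfM (mul_mem hf'M (mul_mem hdM (hM ⟨1, hv, fun _ => rfl⟩)))
  -- Undoing the inversion increases the weight, as in the rearrangement inequality.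
  exact (hmax _ ⟨f', hf', hf'M⟩).not_gt (sum_mul_perm_lt_sum_mul_perm_mul_swap
    (f := fun b => (blockSize q b : ℤ)) (g := fun b => (blockSize q b : ℤ))
    (Nat.cast_lt.2 hAB.1) (Nat.cast_lt.2 hσA))

theorem IsBlockCollapse.mem [Finite X] {M : Submonoid (Function.End X)} (hunits : unitGroup q ≤ M)
    (hswap : ∀ s ∈ nonminimalSizes q, ∃ d ∈ M, IsStepSwap q s d)
    (hgap : ∀ s ∈ gapSizes q, ∃ e ∈ M, IsBlockCollapse q s e)
    {s : ℕ} {e : Function.End X} (he : IsBlockCollapse q s e) : e ∈ M := by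
  obtain ⟨hs, hs2⟩ : s ∈ blockSizes q ∧ 2 ≤ s := by
    obtain ⟨x, y, hxy, hqxy, rfl, -⟩ := he
    exact ⟨mem_range_self _, one_lt_blockSize_iff.2 ⟨x, y, hxy, rfl, hqxy.symm⟩⟩
  by_cases hpred : s - 1 ∈ blockSizes q
  · obtain ⟨d, hdM, A, B, hAB, rfl, hd⟩ := hswap s ⟨hs, s - 1, hpred, by omega⟩
    obtain ⟨C, hC⟩ := hpred
    have hCA : blockSize q C ≤ blockSize q A := hAB.2 C (by omega)
    have hAB_lt := hAB.1
    exact (hd.isBlockCollapse_mul_self (by omega)).mem_of_mem hunits (mul_mem hdM hdM) he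
  · obtain ⟨e', he'M, he'⟩ := hgap s ⟨hs, hs2, hpred⟩
    exact he'.mem_of_mem hunits he'M he

theorem sigma_le_of_exists_generators [Finite X] [Finite Q] (hq : Surjective q)
    {M : Submonoid (Function.End X)} (hunits : unitGroup q ≤ M)
    (hswap : ∀ s ∈ nonminimalSizes q, ∃ d ∈ M, IsStepSwap q s d)
    (hgap : ∀ s ∈ gapSizes q, ∃ e ∈ M, IsBlockCollapse q s e) : sigma q ≤ M := by
  refine sigma_le hq (sizePreserving_le hunits fun _ _ => IsBlockCollapse.mem hunits hswap hgap)
    fun A B hAB => ?_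
  obtain ⟨d, hdM, hd⟩ := hswap _ ⟨mem_range_self B, _, mem_range_self A, hAB.1⟩
  exact hd.exists_mem_isBlockSwap hunits hdM hAB

theorem exists_generators [Finite X] [Finite Q] (hq : Surjective q) :
    ∃ W : Set (Function.End X), W ⊆ sigma q ∧ W.Finite ∧
      W.ncard ≤ (nonminimalSizes q).ncard + (gapSizes q).ncard ∧
      Submonoid.closure (unitGroup q ∪ W) = sigma q := by
  choose! d hd using fun s (hs : s ∈ nonminimalSizes q) => exists_isStepSwap hq hs
  choose! e he using fun s (hs : s ∈ gapSizes q) => exists_isBlockCollapse hs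
  have hfin₁ : (nonminimalSizes q).Finite := finite_blockSizes.subset (sep_subset _ _)
  have hfin₂ : (gapSizes q).Finite := finite_blockSizes.subset (sep_subset _ _)
  let W : Set (Function.End X) := d '' nonminimalSizes q ∪ e '' gapSizes q
  have hW : W ⊆ sigma q := by
    rintro _ (⟨s, hs, rfl⟩ | ⟨s, hs, rfl⟩)
    · exact IsStepSwap.mem_sigma (hd s hs)
    · exact sizePreserving_le_sigma (he s hs).mem_sizePreserving
  have hmem {g : Function.End X} (hg : g ∈ (unitGroup q : Set (Function.End X)) ∪ W) :
      g ∈ Submonoid.closure (unitGroup q ∪ W) := Submonoid.subset_closure hg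
  refine ⟨W, hW, (hfin₁.image d).union (hfin₂.image e), ?_, le_antisymm ?_ ?_⟩
  · exact (ncard_union_le _ _).trans (add_le_add (ncard_image_le hfin₁) (ncard_image_le hfin₂))
  · exact Submonoid.closure_le.2 (union_subset (fun _ => And.right) hW)
  · exact sigma_le_of_exists_generators hq (fun g hg => hmem (Or.inl hg))
      (fun s hs => ⟨d s, hmem (Or.inr (Or.inl ⟨s, hs, rfl⟩)), hd s hs⟩)
      (fun s hs => ⟨e s, hmem (Or.inr (Or.inr ⟨s, hs, rfl⟩)), he s hs⟩)

/-! ### The partition of an equivalence relation -/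

variable (r : Setoid X)

theorem sigmaSet_eq_sigma [Finite X] : SigmaSet r = sigma (Quotient.mk r) := by
  ext f
  constructor
  · rintro ⟨hT, hB⟩
    have hsurj : Surjective (Quotient.map f hT : Quotient r → Quotient r) := by
      intro b
      induction b using Quotient.inductionOn with
      | _ y =>
        obtain ⟨_, ⟨x, rfl⟩, hx⟩ := hB _ (Setoid.mem_classes r y)
        exact ⟨Quotient.mk r x, Quotient.sound hx⟩
    exact ⟨Equiv.ofBijective _ (Finite.surjective_iff_bijective.1 hsurj), fun _ => rfl⟩
  · rintro ⟨σ, hσ⟩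
    refine ⟨fun x y hxy => Quotient.exact ?_, ?_⟩
    · rw [hσ, hσ, Quotient.sound hxy]
    · rintro B ⟨y, rfl⟩
      obtain ⟨x, hx⟩ := Quotient.exists_rep (σ.symm (Quotient.mk r y))
      exact ⟨f x, ⟨x, rfl⟩, Quotient.exact ((hσ x).trans ((σ.eq_symm_apply).1 hx))⟩

theorem SXP_eq_unitGroup [Finite X] : SXP r = unitGroup (Quotient.mk r) := by
  ext f
  refine and_congr_right fun hbij => ⟨fun hr => ?_, ?_⟩
  · rw [← SetLike.mem_coe, ← sigmaSet_eq_sigma]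
    refine ⟨fun x y => (hr x y).2, ?_⟩
    rintro B ⟨y, rfl⟩
    exact ⟨y, hbij.surjective y, r.refl y⟩
  · rintro ⟨σ, hσ⟩ x y
    have mk_eq_iff (a b : X) : r a b ↔ Quotient.mk r a = Quotient.mk r b := Quotient.eq.symm
    rw [mk_eq_iff, mk_eq_iff, hσ, hσ, σ.injective.eq_iff]

theorem mem_blockSizes_iff_blockCount_ne_zero [Finite X] {s : ℕ} :
    s ∈ blockSizes (Quotient.mk r) ↔ blockCount r s ≠ 0 := by
  have block_eq (y : X) : Quotient.mk r ⁻¹' {Quotient.mk r y} = {x | r x y} :=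
    Set.ext fun _ => Quotient.eq
  rw [blockCount, ← Nat.pos_iff_ne_zero, ncard_pos]
  constructor
  · rintro ⟨b, rfl⟩
    obtain ⟨y, rfl⟩ := Quotient.exists_rep b
    exact ⟨_, Setoid.mem_classes r y, by rw [← block_eq, blockSize]⟩
  · rintro ⟨_, ⟨y, rfl⟩, rfl⟩
    exact ⟨Quotient.mk r y, by rw [blockSize, block_eq]⟩

theorem blockSizes_mk [Finite X] : blockSizes (Quotient.mk r) = {s | blockCount r s ≠ 0} :=
  Set.ext fun _ => mem_blockSizes_iff_blockCount_ne_zero r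

theorem relRank_sigmaSet_SXP [Finite X] :
    relRank (SigmaSet r) (SXP r) = {s | blockCount r s ≠ 0}.ncard - 1 +
      {s | 2 ≤ s ∧ blockCount r s ≠ 0 ∧ blockCount r (s - 1) = 0}.ncard := by
  have hnonmin : (nonminimalSizes (Quotient.mk r)).ncard = {s | blockCount r s ≠ 0}.ncard - 1 := by
    rw [nonminimalSizes, ncard_nonminimal, blockSizes_mk]
  have hgap : gapSizes (Quotient.mk r) =
      {s | 2 ≤ s ∧ blockCount r s ≠ 0 ∧ blockCount r (s - 1) = 0} := by
    ext s
    simp only [gapSizes, blockSizes_mk, mem_ofPred_eq, not_not, and_left_comm]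
  rw [relRank, sigmaSet_eq_sigma, SXP_eq_unitGroup, ← hnonmin, ← hgap]
  refine IsLeast.csInf_eq ⟨?_, ?_⟩
  · obtain ⟨W, hW, hfin, hcard, hgen⟩ := exists_generators (Quotient.mk_surjective (s := r))
    exact ⟨W, hW, hfin, hcard.antisymm (ncard_add_ncard_le_ncard_generators
      Quotient.mk_surjective hfin hgen), congrArg _ hgen⟩
  · rintro _ ⟨W, -, hfin, rfl, hgen⟩
    exact ncard_add_ncard_le_ncard_generators Quotient.mk_surjective hfin
      (SetLike.coe_injective hgen)

theorem pos_of_blockCount_ne_zero [Finite X] {s : ℕ} (hs : blockCount r s ≠ 0) : 0 < s := by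
  obtain ⟨b, rfl⟩ := (mem_blockSizes_iff_blockCount_ne_zero r).2 hs
  exact (ncard_pos (toFinite _)).2 ((singleton_nonempty b).preimage Quotient.mk_surjective)

theorem ncard_blockCount_ne_zero [Finite X] : {s | blockCount r s ≠ 0}.ncard =
    {s | 2 ≤ s ∧ blockCount r s ≠ 0}.ncard + gg' (blockCount r 1) := by
  have hfin : {s | 2 ≤ s ∧ blockCount r s ≠ 0}.Finite :=
    finite_blockSizes.subset fun s hs => (mem_blockSizes_iff_blockCount_ne_zero r).2 hs.2
  by_cases h1 : blockCount r 1 = 0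
  · rw [gg', if_neg (by omega), add_zero]
    congr 1 with s
    refine ⟨fun hs => ⟨?_, hs⟩, And.right⟩
    have hs1 : s ≠ 1 := fun h => hs (h ▸ h1)
    have := pos_of_blockCount_ne_zero r hs
    omega
  · have hinsert : {s | blockCount r s ≠ 0} = insert 1 {s | 2 ≤ s ∧ blockCount r s ≠ 0} := by
      ext s
      refine ⟨fun hs => or_iff_not_imp_left.2 fun hs1 => ⟨?_, hs⟩, ?_⟩
      · have := pos_of_blockCount_ne_zero r hs
        omega
      · rintro (rfl | hs)
        exacts [h1, hs.2]
    rw [hinsert, ncard_insert_of_notMem (fun h => absurd h.1 (by decide)) hfin, gg',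
      if_pos (by omega)]

end SigmaXP

/-- The relative rank of `Σ(X,P)` modulo `S(X,P)` equals
`p + q + g'(t) − 1 + l`, where `l` is the number of integers `s ≥ 2` such that
the partition has a block of size `s` but no block of size `s − 1`. -/
theorem relRank_SigmaXP_SXP {X : Type*} [Fintype X] [Nonempty X] (r : Setoid X)
    (p q t : ℕ) (n m : Fin p → ℕ) (l : Fin q → ℕ)
    (hn2 : ∀ i, 2 ≤ n i) (hm2 : ∀ i, 2 ≤ m i) (hl2 : ∀ j, 2 ≤ l j)
    (hninj : Function.Injective n) (hlinj : Function.Injective l)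
    (hnl : ∀ i j, n i ≠ l j)
    (hcn : ∀ i, blockCount r (n i) = m i)
    (hcl : ∀ j, blockCount r (l j) = 1)
    (hct : blockCount r 1 = t)
    (hcover : ∀ s, 2 ≤ s → blockCount r s ≠ 0 → (∃ i, s = n i) ∨ (∃ j, s = l j))
    : relRank (SigmaSet r) (SXP r) =
        p + q + gg' t - 1 +
          {s : ℕ | 2 ≤ s ∧ blockCount r s ≠ 0 ∧ blockCount r (s - 1) = 0}.ncard := by
  have hsizes : {s | 2 ≤ s ∧ blockCount r s ≠ 0} = range (Sum.elim n l) := by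
    ext s
    rw [Sum.elim_range, mem_union, mem_range, mem_range]
    constructor
    · rintro ⟨hs2, hs⟩
      exact (hcover s hs2 hs).imp (fun ⟨i, h⟩ => ⟨i, h.symm⟩) fun ⟨j, h⟩ => ⟨j, h.symm⟩
    · rintro (⟨i, rfl⟩ | ⟨j, rfl⟩)
      · exact ⟨hn2 i, hcn i ▸ Nat.ne_zero_of_lt (hm2 i)⟩
      · exact ⟨hl2 j, hcl j ▸ one_ne_zero⟩
  have hcard : {s | 2 ≤ s ∧ blockCount r s ≠ 0}.ncard = p + q := by
    rw [hsizes, ncard_range_of_injective (hninj.sumElim hlinj hnl), Nat.card_sum, Nat.card_fin,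
      Nat.card_fin]
  rw [SigmaXP.relRank_sigmaSet_SXP, SigmaXP.ncard_blockCount_ne_zero, hcard, hct]
end
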